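/- Let P be a centrally symmetric convex tetradecagon (a convex polygon with exactly 14 vertices, symmetric about a point). If P admits a k-fold translative tiling of the plane for some positive integer k, then k ≥ 6; that is, τ(P) ≥ 6. -/

import Mathlib

open Pointwise

/-- `K + X` is a `k`-fold translative tiling of the plane: the translate multiset
`(x i)` is discrete, every point of the plane belongs to at least `k` of the translates
`K + x i`, and every point belongs to at most `k` of the translates `interior K + x i`
(multiplicity counted over the index set). -/
def IsKFoldTranslativeTiling {ι : Type} (K : Set (ℝ × ℝ)) (x : ι → ℝ × ℝ) (k : ℕ) : Prop :=
  (∀ R : ℝ, {i : ι | ‖x i‖ ≤ R}.Finite) ∧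
  (∀ p : ℝ × ℝ, ∃ s : Finset ι, k ≤ s.card ∧ ∀ i ∈ s, p - x i ∈ K) ∧
  (∀ p : ℝ × ℝ, ∀ s : Finset ι, (∀ i ∈ s, p - x i ∈ interior K) → s.card ≤ k)

/-- `P` is a (two-dimensional) convex polygon whose vertex set is the finite set `V`:
`P` is the convex hull of `V`, every element of `V` is an extreme point of `P`
(so `V` is exactly the vertex set), and `P` has nonempty interior. -/
def IsConvexPolygon (P : Set (ℝ × ℝ)) (V : Finset (ℝ × ℝ)) : Prop :=
  P = convexHull ℝ (V : Set (ℝ × ℝ)) ∧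
  (∀ v ∈ V, v ∈ Set.extremePoints ℝ P) ∧
  (interior P).Nonempty

/-- `P` is symmetric about some point `c`. -/
def IsCentrallySymmetric (P : Set (ℝ × ℝ)) : Prop :=
  ∃ c : ℝ × ℝ, ∀ p ∈ P, 2 • c - p ∈ P

/-- The segment `[a, b]` is an edge of the convex polygon `P` with vertex set `V`. -/
def IsEdge (P : Set (ℝ × ℝ)) (V : Finset (ℝ × ℝ)) (a b : ℝ × ℝ) : Prop :=
  a ∈ V ∧ b ∈ V ∧ a ≠ b ∧ segment ℝ a b ⊆ frontier P

/-!
Place the centre of `P` at the origin, let `P` have at least `2 * k + 3` vertices, and look at a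
point `v` of the plane that is a vertex of some translate. If the direction `u` is parallel to no
edge, then for all small `ε > 0` the point `v + ε • u` is on the boundary of no translate and thus
lies in exactly `k` of them. Comparing `u` and `-u` for suitable `u`, one finds that for each pair
of opposite vertices of `P` exactly one is the position of `v` in a translate, and that exactly one
translate provides it.

There are then fewer boundary positions than twice the vertex positions, so some vertex position
starts an edge with no position in its relative interior. Comparing `v` with the other end of that
edge forces `P` to have exactly `2 * k + 4` vertices, `k = 2 * r + 1` with `r` translates containing
`v` in their interior, all boundary positions to be vertices, and vertex positions to alternate
along the boundary.

Let `w`, `z`, `z₂`, `z₃` be consecutive vertices with `w` a position of `v`. The two points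
`v + (z - w)` and `v + (z₃ - z₂)` have the same vertex positions, and the `r` translates with `v` in
their interior give `r` of these, on the same arc, at both points. Hence translation by
`d = (z₃ - z₂) - (z - w)` maps each of the `r` positions at the first point to another one of them
or to `-w`, so all of them lie on the line through `-w` with direction `d`. As no three vertices are
collinear, `r ≤ 1`, that is, `P` has at most ten vertices.
-/

theorem neg_mem_interior_of_neg_eq {E : Type*} [TopologicalSpace E] [InvolutiveNeg E]
    [ContinuousNeg E] {P : Set E} (hsymm : -P = P) {q : E} (hq : q ∈ interior P) :
    -q ∈ interior P := by
  rw [← hsymm]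
  exact (Homeomorph.neg E).preimage_interior P ▸ (by simpa using hq)

section InwardSet

variable {E : Type*} [AddCommGroup E] [Module ℝ E] [TopologicalSpace E]
  {P : Set E} {q u v : E}

/-- The points of `P` from which a short move in direction `u` leads into the interior of `P`.
For a direction `u` that is parallel to no edge of a convex polygon `P` this is `P` with only
part of its boundary, so that translates of it can be counted without overlaps. -/
def inwardSet (P : Set E) (u : E) : Set E :=
  {q | q ∈ P ∧ ∃ ε : ℝ, 0 < ε ∧ q + ε • u ∈ interior P}

theorem inwardSet_subset : inwardSet P u ⊆ P := fun _ hq => hq.1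

theorem inwardSet_smul {t : ℝ} (ht : 0 < t) : inwardSet P (t • u) = inwardSet P u := by
  ext q
  refine and_congr_right fun _ => ⟨?_, ?_⟩
  · rintro ⟨ε, hε, hi⟩
    exact ⟨ε * t, by positivity, by rwa [mul_smul]⟩
  · rintro ⟨ε, hε, hi⟩
    exact ⟨ε / t, by positivity, by rwa [smul_smul, div_mul_cancel₀ _ ht.ne']⟩

variable [IsTopologicalAddGroup E]

theorem neg_mem_inwardSet_neg (hsymm : -P = P) (hq : q ∈ inwardSet P u) :
    -q ∈ inwardSet P (-u) := by
  obtain ⟨hqP, ε, hε, hi⟩ := hq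
  refine ⟨by rwa [← Set.mem_neg, hsymm], ε, hε, ?_⟩
  rw [smul_neg, ← neg_add]
  exact neg_mem_interior_of_neg_eq hsymm hi

variable [ContinuousSMul ℝ E]

theorem interior_subset_inwardSet : interior P ⊆ inwardSet P u := by
  intro q hq
  refine ⟨interior_subset hq, ?_⟩
  have hcont : ContinuousAt (fun ε : ℝ => q + ε • u) 0 := by fun_prop
  have hnear : ∀ᶠ ε : ℝ in nhdsWithin 0 (Set.Ioi 0), q + ε • u ∈ interior P :=
    (hcont.eventually (isOpen_interior.mem_nhds (by simpa using hq))).filter_mono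
      nhdsWithin_le_nhds
  obtain ⟨ε, hmem, hpos⟩ := (hnear.and self_mem_nhdsWithin).exists
  exact ⟨ε, hpos, hmem⟩

theorem mem_inwardSet_of_mem (hP : Convex ℝ P) (hq : q ∈ inwardSet P u) {δ : ℝ} (hδ : 0 < δ)
    (hv : q + δ • v ∈ P) : q ∈ inwardSet P (u + v) := by
  obtain ⟨hqP, ε, hε, hi⟩ := hq
  refine ⟨hqP, δ * ε / (δ + ε), by positivity, ?_⟩
  have hcombo := hP.combo_interior_self_mem_interior hi hv (a := δ / (δ + ε)) (b := ε / (δ + ε))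
    (by positivity) (by positivity) (by field_simp)
  convert hcombo using 1
  match_scalars <;> field_simp

theorem mem_inwardSet_add (hP : Convex ℝ P) (hu : q ∈ inwardSet P u) (hv : q ∈ inwardSet P v) :
    q ∈ inwardSet P (u + v) := by
  obtain ⟨-, δ, hδ, hi⟩ := hv
  exact mem_inwardSet_of_mem hP hu hδ (interior_subset hi)

theorem mem_inwardSet_smul_add_smul (hP : Convex ℝ P) (hu : q ∈ inwardSet P u)
    (hv : q ∈ inwardSet P v) {a b : ℝ} (ha : 0 ≤ a) (hb : 0 ≤ b) (hne : a • u + b • v ≠ 0) :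
    q ∈ inwardSet P (a • u + b • v) := by
  rcases ha.eq_or_lt with rfl | ha
  · rw [zero_smul, zero_add] at hne ⊢
    rwa [inwardSet_smul (hb.lt_of_ne fun e => hne (by rw [← e, zero_smul]))]
  rcases hb.eq_or_lt with rfl | hb
  · rwa [zero_smul, add_zero, inwardSet_smul ha]
  exact mem_inwardSet_add hP (by rwa [inwardSet_smul ha]) (by rwa [inwardSet_smul hb])

theorem mem_interior_of_mem_inwardSet (hP : Convex ℝ P) (hq : q ∈ inwardSet P u) {δ : ℝ}
    (hδ : 0 < δ) (hsub : q - δ • u ∈ P) : q ∈ interior P := by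
  obtain ⟨-, ε, -, hi⟩ : q ∈ inwardSet P (u + -u) :=
    mem_inwardSet_of_mem hP hq hδ (by rwa [smul_neg, ← sub_eq_add_neg])
  simpa using hi

theorem mem_interior_of_mem_inwardSet_neg (hP : Convex ℝ P) (hq : q ∈ inwardSet P u)
    (hq' : q ∈ inwardSet P (-u)) : q ∈ interior P := by
  obtain ⟨-, δ, hδ, hi⟩ := hq'
  refine mem_interior_of_mem_inwardSet hP hq hδ (interior_subset ?_)
  rwa [sub_eq_add_neg, ← smul_neg]

theorem add_smul_mem_interior_of_le (hP : Convex ℝ P) (hq : q ∈ P) {ε δ : ℝ}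
    (hi : q + ε • u ∈ interior P) (hδ : 0 < δ) (hle : δ ≤ ε) : q + δ • u ∈ interior P := by
  have hε : 0 < ε := hδ.trans_le hle
  have := hP.add_smul_mem_interior hq hi (t := δ / ε) ⟨by positivity, (div_le_one hε).2 hle⟩
  rwa [smul_smul, div_mul_cancel₀ _ hε.ne'] at this

theorem openSegment_subset_interior_of_mem (hP : Convex ℝ P) {a b r : E} (ha : a ∈ P) (hb : b ∈ P)
    (hr : r ∈ openSegment ℝ a b) (hri : r ∈ interior P) : openSegment ℝ a b ⊆ interior P := by
  obtain ⟨t, -, rfl⟩ := openSegment_eq_image_lineMap ℝ a b ▸ hr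
  refine (openSegment_subset_union a b ⟨t, rfl⟩).trans
    (Set.insert_subset hri (Set.union_subset ?_ ?_))
  · exact hP.openSegment_self_interior_subset_interior ha hri
  · exact hP.openSegment_interior_self_subset_interior hri hb

theorem lt_of_mem_interior_of_forall_le {f : E →ₗ[ℝ] ℝ} (hf : f ≠ 0) {c : ℝ}
    (hle : ∀ y ∈ P, f y ≤ c) (hq : q ∈ interior P) : f q < c := by
  obtain ⟨d, hd⟩ := LinearMap.surjective hf 1
  obtain ⟨-, ε, hε, hi⟩ := interior_subset_inwardSet (u := d) hq
  have := hle _ (interior_subset hi)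
  rw [map_add, map_smul, hd, smul_eq_mul, mul_one] at this
  linarith

theorem abs_lt_of_mem_interior_of_forall_abs_le {f : E →ₗ[ℝ] ℝ} (hf : f ≠ 0) {c : ℝ}
    (hle : ∀ y ∈ P, |f y| ≤ c) (hq : q ∈ interior P) : |f q| < c := by
  refine abs_lt.2 ⟨neg_lt.1 ?_, ?_⟩
  · exact lt_of_mem_interior_of_forall_le (neg_ne_zero.2 hf)
      (fun y hy => neg_le.1 (abs_le.1 (hle y hy)).1) hq
  · exact lt_of_mem_interior_of_forall_le hf (fun y hy => (abs_le.1 (hle y hy)).2) hq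

theorem notMem_inwardSet_of_abs_eq {f : E →ₗ[ℝ] ℝ} (hf : f ≠ 0) {c : ℝ}
    (hle : ∀ y ∈ P, |f y| ≤ c) (hu : f u = 0) (hq : |f q| = c) : q ∉ inwardSet P u := by
  rintro ⟨-, ε, -, hi⟩
  have hlt := abs_lt_of_mem_interior_of_forall_abs_le hf hle hi
  rw [map_add, map_smul, hu, smul_zero, add_zero] at hlt
  exact hlt.ne hq

theorem mem_inwardSet_or_mem_inwardSet_neg (hP : Convex ℝ P) (hsymm : -P = P)
    (h0 : (0 : E) ∈ interior P) {f : E →ₗ[ℝ] ℝ} {p : E}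
    (hker : ∀ d, f d = 0 → ∃ t : ℝ, d = t • u) (hp : p ∈ P)
    (hq : q ∈ P) (hqi : q ∉ interior P) (habs : |f q| < |f p|) :
    q ∈ inwardSet P u ∨ q ∈ inwardSet P (-u) := by
  have hfp : f p ≠ 0 := abs_pos.1 ((abs_nonneg _).trans_lt habs)
  -- the point `(f q / f p) • p` is on the line through `q` in direction `u`, and it is interior
  set s := f q / f p with hs
  have hs1 : |s| < 1 := by rwa [hs, abs_div, div_lt_one (abs_pos.2 hfp)]
  have hsp : s • p ∈ interior P := by
    have hnegp : -p ∈ P := by rwa [← Set.mem_neg, hsymm]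
    rcases le_total 0 s with h | h
    · have := hP.combo_interior_self_mem_interior h0 hp (a := 1 - s) (b := s)
        (by linarith [(abs_lt.1 hs1).2]) h (by ring)
      simpa using this
    · have := hP.combo_interior_self_mem_interior h0 hnegp (a := 1 + s) (b := -s)
        (by linarith [(abs_lt.1 hs1).1]) (by linarith) (by ring)
      simpa using this
  obtain ⟨t, ht⟩ := hker (s • p - q) (by
    rw [map_sub, map_smul, smul_eq_mul, hs, div_mul_cancel₀ _ hfp, sub_self])
  rw [sub_eq_iff_eq_add'] at ht
  rw [ht] at hsp
  rcases lt_trichotomy t 0 with h | rfl | h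
  · exact Or.inr ⟨hq, -t, by linarith, by rwa [neg_smul_neg]⟩
  · exact absurd (by simpa using hsp) hqi
  · exact Or.inl ⟨hq, t, h, hsp⟩

end InwardSet

theorem lt_or_mem_of_mem_convexHull {E : Type*} [AddCommGroup E] [Module ℝ E] {S T : Set E}
    {f : E →ₗ[ℝ] ℝ} {c : ℝ} (hT : Convex ℝ T) (hTc : ∀ y ∈ T, f y ≤ c)
    (hS : ∀ v ∈ S, f v < c ∨ v ∈ T) {q : E} (hq : q ∈ convexHull ℝ S) : f q < c ∨ q ∈ T := by
  suffices hconv : Convex ℝ {q | f q < c ∨ q ∈ T} from convexHull_min hS hconv hq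
  have hle : ∀ y ∈ {q | f q < c ∨ q ∈ T}, f y ≤ c := fun y hy => hy.elim le_of_lt (hTc y)
  refine convex_iff_forall_pos.2 fun a ha b hb s t hs ht hst => ?_
  have hfa := mul_le_mul_of_nonneg_left (hle a ha) hs.le
  have hfb := mul_le_mul_of_nonneg_left (hle b hb) ht.le
  have hc : s * c + t * c = c := by rw [← add_mul, hst, one_mul]
  simp only [Set.mem_ofPred_eq, map_add, map_smul, smul_eq_mul]
  rcases ha with ha | ha
  · exact Or.inl (by linarith [mul_lt_mul_of_pos_left ha hs])
  rcases hb with hb | hb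
  · exact Or.inl (by linarith [mul_lt_mul_of_pos_left hb ht])
  exact Or.inr (hT ha hb hs.le ht.le hst)

section PlaneCross

/-- The determinant form on the plane. Every linear functional on the plane is `planeCross u`
for a vector `u`, which spans its kernel; this lets directions and functionals be identified. -/
noncomputable def planeCross : (ℝ × ℝ) →ₗ[ℝ] (ℝ × ℝ) →ₗ[ℝ] ℝ :=
  (LinearMap.mul ℝ ℝ).compl₁₂ (.fst ℝ ℝ ℝ) (.snd ℝ ℝ ℝ) -
    (LinearMap.mul ℝ ℝ).compl₁₂ (.snd ℝ ℝ ℝ) (.fst ℝ ℝ ℝ)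

theorem planeCross_apply (u y : ℝ × ℝ) : planeCross u y = u.1 * y.2 - u.2 * y.1 := by
  simp [planeCross]

theorem planeCross_self (u : ℝ × ℝ) : planeCross u u = 0 := by
  rw [planeCross_apply]; ring

theorem planeCross_comm (u y : ℝ × ℝ) : planeCross u y = -planeCross y u := by
  simp only [planeCross_apply]; ring

theorem exists_planeCross_eq {u : ℝ × ℝ} (hu : u ≠ 0) (c : ℝ) : ∃ m, planeCross u m = c := by
  have hpos : 0 < u.1 ^ 2 + u.2 ^ 2 := by
    by_contra! h
    exact hu (Prod.ext
      (pow_eq_zero_iff two_ne_zero |>.1 (by linarith [sq_nonneg u.1, sq_nonneg u.2]))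
      (pow_eq_zero_iff two_ne_zero |>.1 (by linarith [sq_nonneg u.1, sq_nonneg u.2])))
  refine ⟨(c / (u.1 ^ 2 + u.2 ^ 2)) • (-u.2, u.1), ?_⟩
  rw [map_smul, planeCross_apply, smul_eq_mul, div_mul_eq_mul_div, div_eq_iff hpos.ne']
  ring

theorem planeCross_ne_zero {u : ℝ × ℝ} (hu : u ≠ 0) : planeCross u ≠ 0 := by
  intro h
  obtain ⟨m, hm⟩ := exists_planeCross_eq hu 1
  simp [h] at hm

theorem exists_eq_planeCross (f : ℝ × ℝ →ₗ[ℝ] ℝ) : ∃ u, f = planeCross u := by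
  refine ⟨(f (0, 1), -f (1, 0)), ?_⟩
  ext <;> simp [planeCross_apply]

theorem planeCross_smul_eq (n m d : ℝ × ℝ) :
    planeCross n m • d = planeCross d m • n + planeCross n d • m := by
  ext <;> simp only [planeCross_apply, Prod.smul_fst, Prod.smul_snd, Prod.fst_add, Prod.snd_add,
    smul_eq_mul] <;> ring

theorem exists_eq_smul_of_planeCross_eq_zero {n d : ℝ × ℝ} (hn : n ≠ 0)
    (h : planeCross n d = 0) : ∃ t : ℝ, d = t • n := by
  obtain ⟨m, hm⟩ := exists_planeCross_eq hn 1
  refine ⟨planeCross d m, ?_⟩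
  simpa [hm, h] using planeCross_smul_eq n m d

end PlaneCross

theorem exists_eq_add_nsmul_of_finite {E : Type*} [AddCancelMonoid E] [IsAddTorsionFree E]
    {Y : Set E} (hY : Y.Finite) {d e : E} (hd : d ≠ 0)
    (hstep : ∀ y ∈ Y, y + d = e ∨ y + d ∈ Y) {y : E} (hy : y ∈ Y) :
    ∃ n : ℕ, e = y + n • d := by
  by_contra! hne
  have hmem : ∀ n : ℕ, y + n • d ∈ Y := fun n => by
    induction n with
    | zero => rwa [zero_smul, add_zero]
    | succ n ih =>
      rw [succ_nsmul, ← add_assoc]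
      refine (hstep _ ih).resolve_left fun he => hne (n + 1) ?_
      rw [← he, succ_nsmul, add_assoc]
  refine Set.infinite_of_injective_forall_mem (fun m n hmn => ?_) hmem hY
  exact injective_nsmul_iff_not_isOfFinAddOrder.2 (not_isOfFinAddOrder_of_isAddTorsionFree hd)
    (add_left_cancel hmn)

theorem extremePoints_vadd {𝕜 E : Type*} [Ring 𝕜] [PartialOrder 𝕜] [IsOrderedRing 𝕜]
    [AddCommGroup E] [Module 𝕜 E] (a : E) (s : Set E) :
    Set.extremePoints 𝕜 (a +ᵥ s) = a +ᵥ Set.extremePoints 𝕜 s := by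
  ext v
  obtain ⟨v, rfl⟩ := (AddAction.toPerm a).surjective v
  simp only [AddAction.toPerm_apply, Set.vadd_mem_vadd_set_iff, mem_extremePoints]
  refine and_congr_right fun _ => ?_
  simp only [← Set.image_vadd, Set.forall_mem_image, vadd_eq_add, mem_openSegment_translate,
    add_right_inj]

theorem neg_vadd_eq_of_forall_two_nsmul_sub_mem {E : Type*} [AddCommGroup E] {P : Set E} {c : E}
    (hc : ∀ p ∈ P, 2 • c - p ∈ P) :
    -(-c +ᵥ P) = -c +ᵥ P := by
  have hsub : -(-c +ᵥ P) ⊆ -c +ᵥ P := fun q hq => by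
    rw [Set.mem_neg, Set.mem_vadd_set_iff_neg_vadd_mem, neg_neg, vadd_eq_add] at hq
    rw [Set.mem_vadd_set_iff_neg_vadd_mem, neg_neg, vadd_eq_add,
      show c + q = 2 • c - (c + -q) by rw [two_nsmul]; abel]
    exact hc _ hq
  exact hsub.antisymm (Set.neg_subset.1 hsub)

/-! ### Centrally symmetric polygons -/

/-- A convex polygon `P` with vertex set `V` that is symmetric about the origin. That `V` contains
only vertices is expressed by convex independence, which is how it is used. -/
structure CentredPolygon (P : Set (ℝ × ℝ)) (V : Finset (ℝ × ℝ)) : Prop where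
  eq_convexHull : P = convexHull ℝ (V : Set (ℝ × ℝ))
  notMem_convexHull_sdiff : ∀ v ∈ V, v ∉ convexHull ℝ ((V : Set (ℝ × ℝ)) \ {v})
  neg_mem_vertices : ∀ v ∈ V, -v ∈ V
  zero_mem_interior : (0 : ℝ × ℝ) ∈ interior P

/-- The functional `planeCross u` attains its maximum over `V` at `w` and nowhere else. -/
def Exposes (V : Finset (ℝ × ℝ)) (u w : ℝ × ℝ) : Prop :=
  w ∈ V ∧ ∀ y ∈ V, y ≠ w → planeCross u y < planeCross u w

/-- The distinct points `w` and `z` of `V` span an edge: all other points of `V` lie strictly on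
one side of the line through `w` and `z`, the side being given by the sign of `t`. -/
def IsAdj (V : Finset (ℝ × ℝ)) (w z : ℝ × ℝ) : Prop :=
  w ∈ V ∧ z ∈ V ∧ w ≠ z ∧ ∃ t : ℝ, ∀ y ∈ V, y ≠ w → y ≠ z → 0 < t * planeCross (z - w) (y - w)

/-- The pair `(w, z)` is an edge of the polygon with vertex set `V`, oriented counterclockwise. -/
def IsCcwEdge (V : Finset (ℝ × ℝ)) (w z : ℝ × ℝ) : Prop :=
  w ∈ V ∧ z ∈ V ∧ w ≠ z ∧ ∀ y ∈ V, y ≠ w → y ≠ z → 0 < planeCross (z - w) (y - w)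

/-- The points `w`, `z`, `z₂` are consecutive vertices of the polygon with vertex set `V`, in one
of the two orientations of its boundary. -/
def IsBoundaryPath (V : Finset (ℝ × ℝ)) (w z z₂ : ℝ × ℝ) : Prop :=
  IsAdj V w z ∧ IsAdj V z z₂ ∧ w ≠ z₂

theorem planeCross_sub_sub_swap (w z y : ℝ × ℝ) :
    planeCross (w - z) (y - z) = -planeCross (z - w) (y - w) := by
  simp only [planeCross_apply, Prod.fst_sub, Prod.snd_sub]
  ring

theorem planeCross_eq_of_mem_segment {w z q : ℝ × ℝ} (hq : q ∈ segment ℝ w z) :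
    planeCross (z - w) q = planeCross (z - w) w := by
  obtain ⟨s, -, rfl⟩ := segment_eq_image' ℝ w z ▸ hq
  rw [map_add, map_smul, planeCross_self, smul_zero, add_zero]

theorem add_sub_mem_openSegment {w z r : ℝ × ℝ} (hr : r ∈ openSegment ℝ w (-z)) :
    r + (z - w) ∈ openSegment ℝ z (-w) := by
  obtain ⟨s, t, hs, ht, hst, rfl⟩ := hr
  refine ⟨s, t, hs, ht, hst, ?_⟩
  obtain rfl := eq_sub_of_add_eq hst
  module

theorem IsCcwEdge.isAdj {V : Finset (ℝ × ℝ)} {w z : ℝ × ℝ} (e : IsCcwEdge V w z) : IsAdj V w z :=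
  ⟨e.1, e.2.1, e.2.2.1, 1, by simpa only [one_mul] using e.2.2.2⟩

theorem IsAdj.symm {V : Finset (ℝ × ℝ)} {w z : ℝ × ℝ} (a : IsAdj V w z) : IsAdj V z w := by
  obtain ⟨hw, hz, hne, t, ht⟩ := a
  refine ⟨hz, hw, hne.symm, -t, fun y hy hyz hyw => ?_⟩
  rw [planeCross_sub_sub_swap, neg_mul_neg]
  exact ht y hy hyw hyz

theorem IsBoundaryPath.symm {V : Finset (ℝ × ℝ)} {w z z₂ : ℝ × ℝ} (p : IsBoundaryPath V w z z₂) :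
    IsBoundaryPath V z₂ z w :=
  ⟨p.2.1.symm, p.1.symm, p.2.2.symm⟩

namespace CentredPolygon

variable {P : Set (ℝ × ℝ)} {V : Finset (ℝ × ℝ)} {u w z q : ℝ × ℝ}

theorem convex (h : CentredPolygon P V) : Convex ℝ P :=
  h.eq_convexHull ▸ convex_convexHull ℝ _

theorem isCompact (h : CentredPolygon P V) : IsCompact P := by
  rw [h.eq_convexHull]
  exact V.finite_toSet.isCompact_convexHull (𝕜 := ℝ)

theorem mem_of_mem_vertices (h : CentredPolygon P V) (hw : w ∈ V) : w ∈ P := by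
  rw [h.eq_convexHull]
  exact subset_convexHull ℝ _ hw

theorem neg_eq (h : CentredPolygon P V) : -P = P := by
  rw [h.eq_convexHull, ← convexHull_neg]
  congr 1
  ext v
  exact ⟨fun hv => by simpa using h.neg_mem_vertices _ hv, h.neg_mem_vertices v⟩

theorem neg_mem (h : CentredPolygon P V) (hq : q ∈ P) : -q ∈ P := by
  rwa [← Set.mem_neg, h.neg_eq]

theorem forall_mem_le (h : CentredPolygon P V) {f : ℝ × ℝ →ₗ[ℝ] ℝ} {c : ℝ}
    (hV : ∀ y ∈ V, f y ≤ c) : ∀ q ∈ P, f q ≤ c := by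
  rw [h.eq_convexHull]
  exact convexHull_min hV (convex_halfSpace_le f.isLinear c)

theorem exists_vertex_ne_ne (h : CentredPolygon P V) (a b : ℝ × ℝ) :
    ∃ y ∈ V, y ≠ a ∧ y ≠ b := by
  by_contra! hall
  -- otherwise some nonzero functional takes a single value on `P`
  obtain ⟨n, hn, hab⟩ : ∃ n : ℝ × ℝ, n ≠ 0 ∧ planeCross n a = planeCross n b := by
    rcases eq_or_ne a b with rfl | hne
    · exact ⟨(1, 0), by simp, rfl⟩
    · refine ⟨b - a, sub_ne_zero.2 hne.symm, ?_⟩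
      rw [← sub_eq_zero, ← map_sub, ← neg_sub b a, map_neg, planeCross_self, neg_zero]
  have heq : ∀ y ∈ V, planeCross n y = planeCross n a := fun y hy => by
    rcases eq_or_ne y a with rfl | hya
    · rfl
    · rw [hall y hy hya, hab]
  have hn' := planeCross_ne_zero hn
  have hpos := lt_of_mem_interior_of_forall_le hn'
    (h.forall_mem_le fun y hy => (heq y hy).le) h.zero_mem_interior
  have hneg := lt_of_mem_interior_of_forall_le (neg_ne_zero.2 hn')
    (h.forall_mem_le fun y hy => (congrArg Neg.neg (heq y hy)).le) h.zero_mem_interior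
  rw [map_zero] at hpos hneg
  linarith

theorem notMem_segment (h : CentredPolygon P V) {v a b : ℝ × ℝ} (hv : v ∈ V) (ha : a ∈ V)
    (hb : b ∈ V) (hav : a ≠ v) (hbv : b ≠ v) : v ∉ segment ℝ a b := fun hseg =>
  h.notMem_convexHull_sdiff v hv
    (segment_subset_convexHull (s := (V : Set (ℝ × ℝ)) \ {v}) ⟨ha, hav⟩ ⟨hb, hbv⟩ hseg)

theorem exists_exposes (h : CentredPolygon P V) (hw : w ∈ V) : ∃ u, Exposes V u w := by
  have hclosed : IsClosed (convexHull ℝ ((V : Set (ℝ × ℝ)) \ {w})) :=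
    ((V.finite_toSet.subset Set.sdiff_subset).isCompact_convexHull (𝕜 := ℝ)).isClosed
  obtain ⟨f, s, hlt, hs⟩ := geometric_hahn_banach_closed_point (convex_convexHull ℝ _) hclosed
    (h.notMem_convexHull_sdiff w hw)
  obtain ⟨u, hu⟩ := exists_eq_planeCross f.toLinearMap
  refine ⟨u, hw, fun y hy hyw => ?_⟩
  rw [← hu]
  exact (hlt y (subset_convexHull ℝ _ ⟨hy, hyw⟩)).trans hs

section Exposes

variable (h : CentredPolygon P V) (g : Exposes V u w)
include h g

theorem exposes_neg : Exposes V (-u) (-w) := by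
  refine ⟨h.neg_mem_vertices _ g.1, fun y hy hyw => ?_⟩
  simpa using g.2 (-y) (h.neg_mem_vertices _ hy) (by rwa [Ne, neg_eq_iff_eq_neg])

theorem direction_ne_zero : u ≠ 0 := by
  rintro rfl
  obtain ⟨y, hy, hyw, -⟩ := h.exists_vertex_ne_ne w w
  simpa using g.2 y hy hyw

theorem planeCross_lt_of_ne (hq : q ∈ P) (hne : q ≠ w) : planeCross u q < planeCross u w := by
  rw [h.eq_convexHull] at hq
  refine (lt_or_mem_of_mem_convexHull (convex_singleton w) (by simp)
    (fun v hv => ?_) hq).resolve_right hne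
  exact or_iff_not_imp_right.2 (g.2 v hv)

theorem eq_of_planeCross_eq (hq : q ∈ P) (heq : planeCross u q = planeCross u w) : q = w := by
  by_contra hne
  exact (h.planeCross_lt_of_ne g hq hne).ne heq

theorem abs_planeCross_lt (hq : q ∈ P) (hne : q ≠ w) (hne' : q ≠ -w) :
    |planeCross u q| < |planeCross u w| := by
  have hlt := h.planeCross_lt_of_ne g hq hne
  have hgt := h.planeCross_lt_of_ne g (h.neg_mem hq) (by rwa [Ne, neg_eq_iff_eq_neg])
  rw [map_neg] at hgt
  exact (abs_lt.2 ⟨by linarith, hlt⟩).trans_le (le_abs_self _)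

theorem abs_planeCross_le (hq : q ∈ P) : |planeCross u q| ≤ |planeCross u w| := by
  rcases eq_or_ne q w with rfl | hne
  · rfl
  rcases eq_or_ne q (-w) with rfl | hne'
  · rw [map_neg, abs_neg]
  exact (h.abs_planeCross_lt g hq hne hne').le

theorem notMem_inwardSet_of_exposes : w ∉ inwardSet P u :=
  notMem_inwardSet_of_abs_eq (planeCross_ne_zero (h.direction_ne_zero g))
    (fun _ hq => h.abs_planeCross_le g hq) (planeCross_self u) rfl

theorem neg_notMem_inwardSet_of_exposes : -w ∉ inwardSet P u :=
  notMem_inwardSet_of_abs_eq (planeCross_ne_zero (h.direction_ne_zero g))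
    (fun _ hq => h.abs_planeCross_le g hq) (planeCross_self u) (by rw [map_neg, abs_neg])

theorem mem_inwardSet_or_of_exposes (hq : q ∈ P) (hqi : q ∉ interior P) (hne : q ≠ w)
    (hne' : q ≠ -w) : q ∈ inwardSet P u ∨ q ∈ inwardSet P (-u) :=
  mem_inwardSet_or_mem_inwardSet_neg h.convex h.neg_eq h.zero_mem_interior
    (fun _ => exists_eq_smul_of_planeCross_eq_zero (h.direction_ne_zero g))
    (h.mem_of_mem_vertices g.1) hq hqi (h.abs_planeCross_lt g hq hne hne')

theorem add_smul_notMem_of_notMem_inwardSet (hqD : q ∉ inwardSet P u) {ε : ℝ}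
    (hε : 0 < ε) (hq : q ∈ P) : q + ε • u ∉ P := by
  intro hmem
  have hqi : q ∉ interior P := fun hi => hqD (interior_subset_inwardSet hi)
  have hlevel : planeCross u (q + ε • u) = planeCross u q := by
    rw [map_add, map_smul, planeCross_self, smul_zero, add_zero]
  have hmove : q + ε • u ≠ q := by
    simpa using ⟨hε.ne', h.direction_ne_zero g⟩
  by_cases hne : q = w
  · exact hmove ((h.eq_of_planeCross_eq g hmem (by rw [hlevel, hne])).trans hne.symm)
  by_cases hne' : q = -w
  · refine hmove ((neg_eq_iff_eq_neg.1 (h.eq_of_planeCross_eq g (h.neg_mem hmem) ?_)).trans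
      hne'.symm)
    rw [map_neg, hlevel, hne', map_neg, neg_neg]
  have hback := (h.mem_inwardSet_or_of_exposes g hq hqi hne hne').resolve_left hqD
  exact hqi (mem_interior_of_mem_inwardSet h.convex hback hε (by rwa [smul_neg, sub_neg_eq_add]))

end Exposes

theorem notMem_interior (h : CentredPolygon P V) (hw : w ∈ V) : w ∉ interior P := fun hi =>
  let ⟨_, g⟩ := h.exists_exposes hw
  h.notMem_inwardSet_of_exposes g (interior_subset_inwardSet hi)

theorem neg_ne_self (h : CentredPolygon P V) (hw : w ∈ V) : -w ≠ w := fun heq =>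
  h.notMem_interior hw (self_eq_neg.1 heq.symm ▸ h.zero_mem_interior)

theorem isAdj_neg (h : CentredPolygon P V) (a : IsAdj V w z) : IsAdj V (-w) (-z) := by
  obtain ⟨hw, hz, hne, t, ht⟩ := a
  refine ⟨h.neg_mem_vertices _ hw, h.neg_mem_vertices _ hz, by simpa using hne, t,
    fun y hy hyw hyz => ?_⟩
  have := ht (-y) (h.neg_mem_vertices _ hy) (by rwa [Ne, neg_eq_iff_eq_neg])
    (by rwa [Ne, neg_eq_iff_eq_neg])
  rwa [show -z - -w = -(z - w) by abel, show y - -w = -(-y - w) by abel, map_neg planeCross,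
    LinearMap.neg_apply, map_neg (planeCross (z - w)), neg_neg]

theorem pos_or_mem_segment (h : CentredPolygon P V) {t : ℝ}
    (ht : ∀ y ∈ V, y ≠ w → y ≠ z → 0 < t * planeCross (z - w) (y - w)) (hq : q ∈ P) :
    0 < t * planeCross (z - w) (q - w) ∨ q ∈ segment ℝ w z := by
  have hiff : ∀ y, 0 < t * planeCross (z - w) (y - w) ↔
      (-t • planeCross (z - w)) y < -t * planeCross (z - w) w := fun y => by
    rw [map_sub (planeCross (z - w)), LinearMap.smul_apply, smul_eq_mul]
    constructor <;> intro hlt <;> linarith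
  rw [h.eq_convexHull] at hq
  rw [hiff]
  refine lt_or_mem_of_mem_convexHull (convex_segment w z)
    (fun y hy => (congrArg (-t * ·) (planeCross_eq_of_mem_segment hy)).le) (fun v hv => ?_) hq
  rw [← hiff, or_iff_not_imp_right]
  exact fun hseg => ht v hv (fun e => hseg (e ▸ left_mem_segment ℝ w z))
    (fun e => hseg (e ▸ right_mem_segment ℝ w z))

theorem nonneg_of_mem (h : CentredPolygon P V) {t : ℝ}
    (ht : ∀ y ∈ V, y ≠ w → y ≠ z → 0 < t * planeCross (z - w) (y - w)) (hq : q ∈ P) :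
    0 ≤ t * planeCross (z - w) (q - w) := by
  rcases h.pos_or_mem_segment ht hq with hpos | hseg
  · exact hpos.le
  · rw [map_sub (planeCross (z - w)), planeCross_eq_of_mem_segment hseg, sub_self, mul_zero]

section IsAdj

variable (h : CentredPolygon P V) (a : IsAdj V w z)
include h a

theorem abs_planeCross_lt_of_isAdj (hq : q ∈ P) (hseg : q ∉ segment ℝ w z)
    (hseg' : -q ∉ segment ℝ w z) : |planeCross (z - w) q| < |planeCross (z - w) w| := by
  obtain ⟨-, -, -, t, ht⟩ := a
  have hpos := (h.pos_or_mem_segment ht hq).resolve_right hseg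
  have hpos' := (h.pos_or_mem_segment ht (h.neg_mem hq)).resolve_right hseg'
  have ht0 : t ≠ 0 := by
    rintro rfl
    rw [zero_mul] at hpos
    exact hpos.false
  rw [map_sub (planeCross (z - w))] at hpos hpos'
  rw [map_neg (planeCross (z - w))] at hpos'
  refine lt_of_mul_lt_mul_left ?_ (abs_nonneg t)
  rw [← abs_mul, ← abs_mul]
  exact (abs_lt.2 ⟨by linarith, by linarith⟩).trans_le (neg_le_abs _)

theorem abs_planeCross_le_of_isAdj (hq : q ∈ P) :
    |planeCross (z - w) q| ≤ |planeCross (z - w) w| := by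
  by_cases hseg : q ∈ segment ℝ w z
  · rw [planeCross_eq_of_mem_segment hseg]
  by_cases hseg' : -q ∈ segment ℝ w z
  · rw [← planeCross_eq_of_mem_segment hseg', map_neg, abs_neg]
  exact (h.abs_planeCross_lt_of_isAdj a hq hseg hseg').le

theorem notMem_inwardSet_of_abs_planeCross_eq
    (hq : |planeCross (z - w) q| = |planeCross (z - w) w|) : q ∉ inwardSet P (z - w) :=
  notMem_inwardSet_of_abs_eq (planeCross_ne_zero (sub_ne_zero.2 a.2.2.1.symm))
    (fun _ hy => h.abs_planeCross_le_of_isAdj a hy) (planeCross_self _) hq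

theorem abs_planeCross_lt_of_mem_inwardSet (hq : q ∈ inwardSet P (z - w)) :
    |planeCross (z - w) q| < |planeCross (z - w) w| :=
  (h.abs_planeCross_le_of_isAdj a (inwardSet_subset hq)).lt_of_ne fun e =>
    h.notMem_inwardSet_of_abs_planeCross_eq a e hq

theorem right_notMem_inwardSet : z ∉ inwardSet P (z - w) :=
  h.notMem_inwardSet_of_abs_planeCross_eq a
    (by rw [planeCross_eq_of_mem_segment (right_mem_segment ℝ w z)])

theorem neg_right_notMem_inwardSet : -z ∉ inwardSet P (z - w) :=
  h.notMem_inwardSet_of_abs_planeCross_eq a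
    (by rw [map_neg (planeCross (z - w)), abs_neg,
      planeCross_eq_of_mem_segment (right_mem_segment ℝ w z)])

theorem notMem_interior_of_mem_segment (hq : q ∈ segment ℝ w z) : q ∉ interior P := fun hi =>
  h.notMem_inwardSet_of_abs_planeCross_eq a (by rw [planeCross_eq_of_mem_segment hq])
    (interior_subset_inwardSet hi)

theorem mem_segment_or_mem_inwardSet (hq : q ∈ P) (hqi : q ∉ interior P) :
    q ∈ segment ℝ w z ∨ -q ∈ segment ℝ w z ∨
      q ∈ inwardSet P (z - w) ∨ q ∈ inwardSet P (w - z) := by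
  by_cases hseg : q ∈ segment ℝ w z
  · exact Or.inl hseg
  by_cases hseg' : -q ∈ segment ℝ w z
  · exact Or.inr (Or.inl hseg')
  rw [← neg_sub z w]
  exact Or.inr (Or.inr (mem_inwardSet_or_mem_inwardSet_neg h.convex h.neg_eq h.zero_mem_interior
    (fun _ => exists_eq_smul_of_planeCross_eq_zero (sub_ne_zero.2 a.2.2.1.symm))
    (h.mem_of_mem_vertices a.1) hq hqi (h.abs_planeCross_lt_of_isAdj a hq hseg hseg')))

theorem planeCross_ne_zero_of_isAdj : planeCross (z - w) w ≠ 0 := by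
  intro h0
  have hn := planeCross_ne_zero (sub_ne_zero.2 a.2.2.1.symm)
  have := abs_lt_of_mem_interior_of_forall_abs_le hn
    (fun _ hy => h.abs_planeCross_le_of_isAdj a hy) h.zero_mem_interior
  rw [map_zero (planeCross (z - w)), h0] at this
  exact this.false

theorem ne_neg_of_isAdj : z ≠ -w := by
  rintro rfl
  refine h.planeCross_ne_zero_of_isAdj a ?_
  rw [map_sub, LinearMap.sub_apply, map_neg, LinearMap.neg_apply, planeCross_self, neg_zero,
    sub_zero]

end IsAdj

theorem not_collinear (h : CentredPolygon P V) {a b c : ℝ × ℝ} (ha : a ∈ V) (hb : b ∈ V)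
    (hc : c ∈ V) (hab : a ≠ b) (hbc : b ≠ c) (hca : c ≠ a) : ¬ Collinear ℝ {a, b, c} := by
  intro hcol
  rcases hcol.wbtw_or_wbtw_or_wbtw with hw | hw | hw
  · exact h.notMem_segment hb ha hc hab hbc.symm (mem_segment_iff_wbtw.2 hw)
  · exact h.notMem_segment hc hb ha hbc hca.symm (mem_segment_iff_wbtw.2 hw)
  · exact h.notMem_segment ha hc hb hca hab.symm (mem_segment_iff_wbtw.2 hw)

theorem planeCross_ne_zero_of_ne (h : CentredPolygon P V) {y : ℝ × ℝ} (hw : w ∈ V) (hz : z ∈ V)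
    (hy : y ∈ V) (hwz : w ≠ z) (hzy : z ≠ y) (hyw : y ≠ w) : planeCross (z - w) (y - w) ≠ 0 := by
  intro h0
  obtain ⟨t, ht⟩ := exists_eq_smul_of_planeCross_eq_zero (sub_ne_zero.2 hwz.symm) h0
  refine h.not_collinear hw hz hy hwz hzy hyw
    ((collinear_iff_of_mem (p₀ := w) (by simp)).2 ⟨z - w, ?_⟩)
  rintro p (rfl | rfl | rfl)
  · exact ⟨0, by simp⟩
  · exact ⟨1, by simp⟩
  · exact ⟨t, by simp [← ht]⟩

theorem exists_forall_pos_mul_planeCross (h : CentredPolygon P V) (hw : w ∈ V) {σ : ℝ}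
    (hσ : σ ≠ 0) :
    ∃ z ∈ V, z ≠ w ∧ ∀ y ∈ V, y ≠ w → y ≠ z → 0 < σ * planeCross (z - w) (y - w) := by
  obtain ⟨u, g⟩ := h.exists_exposes hw
  obtain ⟨m, hm⟩ := exists_planeCross_eq (h.direction_ne_zero g) σ
  -- `z` maximises the slope of `y - w` with respect to the axes `-u` and `m`
  set height : ℝ × ℝ → ℝ := fun y => planeCross u (w - y)
  set width : ℝ × ℝ → ℝ := fun y => planeCross m (y - w)
  have hheight : ∀ y ∈ V, y ≠ w → 0 < height y := fun y hy hyw => by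
    simpa [height] using g.2 y hy hyw
  obtain ⟨y₀, hy₀, hy₀w, -⟩ := h.exists_vertex_ne_ne w w
  obtain ⟨z, hz, hmax⟩ := (V.erase w).exists_max_image (fun y => width y / height y)
    ⟨y₀, Finset.mem_erase.2 ⟨hy₀w, hy₀⟩⟩
  obtain ⟨hzw, hzV⟩ := Finset.mem_erase.1 hz
  refine ⟨z, hzV, hzw, fun y hy hyw hyz => lt_of_le_of_ne ?_ (mul_ne_zero hσ
    (h.planeCross_ne_zero_of_ne hw hzV hy hzw.symm hyz.symm hyw)).symm⟩
  have hslope := hmax y (Finset.mem_erase.2 ⟨hyw, hy⟩)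
  rw [div_le_div_iff₀ (hheight y hy hyw) (hheight z hzV hzw)] at hslope
  have hident : σ * planeCross (z - w) (y - w) = width z * height y - width y * height z := by
    simp only [← hm, width, height, planeCross_apply, Prod.fst_sub, Prod.snd_sub]
    ring
  linarith

theorem exists_isAdj_ne (h : CentredPolygon P V) (hw : w ∈ V) (b : ℝ × ℝ) :
    ∃ z, IsAdj V w z ∧ z ≠ b := by
  obtain ⟨z, hz, hzw, hpos⟩ := h.exists_forall_pos_mul_planeCross hw one_ne_zero
  obtain ⟨z', hz', hzw', hneg⟩ :=
    h.exists_forall_pos_mul_planeCross hw (neg_ne_zero.2 one_ne_zero)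
  rcases eq_or_ne z b with rfl | hzb
  · refine ⟨z', ⟨hw, hz', hzw'.symm, -1, hneg⟩, ?_⟩
    rintro rfl
    obtain ⟨y, hy, hyw, hyz⟩ := h.exists_vertex_ne_ne w z'
    linarith [hpos y hy hyw hyz, hneg y hy hyw hyz]
  · exact ⟨z, ⟨hw, hz, hzw.symm, 1, hpos⟩, hzb⟩

theorem exists_isBoundaryPath (h : CentredPolygon P V) (a : IsAdj V w z) :
    ∃ z₂, IsBoundaryPath V w z z₂ := by
  obtain ⟨z₂, a₂, hne⟩ := h.exists_isAdj_ne a.2.1 w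
  exact ⟨z₂, a, a₂, hne.symm⟩

section IsBoundaryPath

variable {z₂ : ℝ × ℝ} (h : CentredPolygon P V) (p : IsBoundaryPath V w z z₂)
include p

theorem pos_of_isBoundaryPath {y : ℝ × ℝ} (hy : y ∈ V) (hyw : y ≠ w) (hyz : y ≠ z) :
    0 < planeCross (z - w) (z₂ - z) * planeCross (z - w) (y - w) := by
  obtain ⟨⟨-, -, -, t, ht⟩, a₂, hne⟩ := p
  have hturn := ht z₂ a₂.2.1 hne.symm a₂.2.2.1.symm
  rw [show z₂ - w = (z₂ - z) + (z - w) by abel, map_add, planeCross_self, add_zero] at hturn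
  have := mul_pos hturn (ht y hy hyw hyz)
  rw [mul_mul_mul_comm] at this
  exact pos_of_mul_pos_right this (mul_self_nonneg t)

theorem pos_of_isBoundaryPath' {y : ℝ × ℝ} (hy : y ∈ V) (hyz : y ≠ z) (hyz₂ : y ≠ z₂) :
    0 < planeCross (z - w) (z₂ - z) * planeCross (z₂ - z) (y - z) := by
  have := pos_of_isBoundaryPath p.symm hy hyz₂ hyz
  rwa [planeCross_sub_sub_swap, ← neg_sub z₂ z, ← neg_sub z w, map_neg planeCross,
    LinearMap.neg_apply, map_neg, neg_neg, planeCross_comm, neg_mul_neg] at this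

theorem planeCross_ne_zero_of_isBoundaryPath : planeCross (z - w) (z₂ - z) ≠ 0 := fun h0 => by
  have := pos_of_isBoundaryPath p p.2.1.2.1 p.2.2.symm p.2.1.2.2.1.symm
  rw [h0, zero_mul] at this
  exact this.false

include h

theorem exists_nonneg_smul_add_smul (hq : q ∈ P) :
    ∃ a b : ℝ, 0 ≤ a ∧ 0 ≤ b ∧ q - z = a • (w - z) + b • (z₂ - z) := by
  set κ := planeCross (z - w) (z₂ - z) with hκ
  have hκ0 : κ ≠ 0 := planeCross_ne_zero_of_isBoundaryPath p
  have hfst := h.nonneg_of_mem (fun _ => pos_of_isBoundaryPath p) hq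
  have hsnd := h.nonneg_of_mem (fun _ => pos_of_isBoundaryPath' p) hq
  rw [← hκ] at hfst hsnd
  have hcross : planeCross (z - w) (q - z) = planeCross (z - w) (q - w) := by
    rw [← sub_sub_sub_cancel_right q z w, map_sub, planeCross_self, sub_zero]
  have hident := planeCross_smul_eq (z - w) (z₂ - z) (q - z)
  rw [← hκ, hcross, planeCross_comm (q - z)] at hident
  have hdiv : ∀ x : ℝ, κ⁻¹ * x = κ⁻¹ * κ⁻¹ * (κ * x) := fun x => by
    rw [mul_assoc, inv_mul_cancel_left₀ hκ0]
  refine ⟨κ⁻¹ * planeCross (z₂ - z) (q - z), κ⁻¹ * planeCross (z - w) (q - w),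
    hdiv _ ▸ mul_nonneg (mul_self_nonneg _) hsnd, hdiv _ ▸ mul_nonneg (mul_self_nonneg _) hfst, ?_⟩
  refine ((eq_inv_smul_iff₀ hκ0).2 hident).trans ?_
  module

theorem mem_interior_of_mem_inwardSet_of_mem_inwardSet (hq : q ∈ inwardSet P (w - z))
    (hq₂ : q ∈ inwardSet P (z₂ - z)) : q ∈ interior P := by
  obtain ⟨a, b, ha, hb, hab⟩ := h.exists_nonneg_smul_add_smul p (inwardSet_subset hq)
  have hqz : q ≠ z := by
    rintro rfl
    exact h.notMem_inwardSet_of_abs_planeCross_eq p.2.1 rfl hq₂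
  have hback : q ∈ inwardSet P (q - z) :=
    hab ▸ mem_inwardSet_smul_add_smul h.convex hq hq₂ ha hb (hab ▸ sub_ne_zero.2 hqz)
  refine mem_interior_of_mem_inwardSet h.convex hback one_pos ?_
  rw [one_smul, sub_sub_cancel]
  exact h.mem_of_mem_vertices p.2.1.1

theorem exists_exposes_sub : ∃ z' : ℝ × ℝ, (z' = z ∨ z' = -z) ∧ Exposes V (z₂ - w) z' := by
  have hpos : ∀ y ∈ V, y ≠ z → planeCross (z - w) (z₂ - z) * planeCross (z₂ - w) z <
      planeCross (z - w) (z₂ - z) * planeCross (z₂ - w) y := fun y hy hyz => by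
    have hsplit : planeCross (z₂ - w) y - planeCross (z₂ - w) z =
        planeCross (z - w) (y - w) + planeCross (z₂ - z) (y - z) := by
      simp only [planeCross_apply, Prod.fst_sub, Prod.snd_sub]
      ring
    rw [← sub_pos, ← mul_sub, hsplit, mul_add]
    have hyP := h.mem_of_mem_vertices hy
    rcases eq_or_ne y w with rfl | hyw
    · exact add_pos_of_nonneg_of_pos (h.nonneg_of_mem (fun _ => pos_of_isBoundaryPath p) hyP)
        (pos_of_isBoundaryPath' p hy hyz p.2.2)
    · exact add_pos_of_pos_of_nonneg (pos_of_isBoundaryPath p hy hyw hyz)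
        (h.nonneg_of_mem (fun _ => pos_of_isBoundaryPath' p) hyP)
  rcases (planeCross_ne_zero_of_isBoundaryPath p).lt_or_gt with hneg | hpos'
  · exact ⟨z, Or.inl rfl, p.2.1.1, fun y hy hyz =>
      lt_of_mul_lt_mul_of_nonpos_left (hpos y hy hyz) hneg.le⟩
  · refine ⟨-z, Or.inr rfl, h.neg_mem_vertices _ p.2.1.1, fun y hy hyz => ?_⟩
    have := hpos (-y) (h.neg_mem_vertices _ hy) (by rwa [Ne, neg_eq_iff_eq_neg])
    have := lt_of_mul_lt_mul_of_nonneg_left this hpos'.le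
    rw [map_neg (planeCross (z₂ - w))] at this ⊢
    linarith

theorem notMem_inwardSet_sub : z ∉ inwardSet P (z₂ - w) := by
  obtain ⟨z', rfl | rfl, g⟩ := h.exists_exposes_sub p
  · exact h.notMem_inwardSet_of_exposes g
  · simpa using h.neg_notMem_inwardSet_of_exposes g

theorem mem_or_mem_inwardSet_sub (hq : q ∈ P) (hqi : q ∉ interior P) (hqz : q ≠ z)
    (hqz' : q ≠ -z) : q ∈ inwardSet P (z₂ - w) ∨ q ∈ inwardSet P (w - z₂) := by
  obtain ⟨z', hz', g⟩ := h.exists_exposes_sub p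
  rw [← neg_sub z₂ w]
  rcases hz' with rfl | rfl
  · exact h.mem_inwardSet_or_of_exposes g hq hqi hqz hqz'
  · exact h.mem_inwardSet_or_of_exposes g hq hqi hqz' (by rwa [neg_neg])

theorem eq_or_mem_openSegment_or_mem_inwardSet (hqi : q ∉ interior P)
    (hq : q ∈ inwardSet P (z₂ - w)) : q = w ∨ q ∈ openSegment ℝ w z ∨ q ∈ inwardSet P (z - w) := by
  have hqz : q ≠ z := by
    rintro rfl
    exact h.notMem_inwardSet_sub p hq
  rcases h.mem_segment_or_mem_inwardSet p.1 (inwardSet_subset hq) hqi with hs | hs | hs | hs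
  · rw [← insert_endpoints_openSegment] at hs
    exact or_assoc.1 (Or.inl (hs.imp_right fun hs => hs.resolve_left hqz))
  · obtain ⟨-, ε, hε, hi⟩ := hq
    have hnonneg := h.nonneg_of_mem (fun _ => pos_of_isBoundaryPath p)
      (h.neg_mem (interior_subset hi))
    have hturn := pos_of_isBoundaryPath p p.2.1.2.1 p.2.2.symm p.2.1.2.2.1.symm
    have hlevel : planeCross (z - w) (-(q + ε • (z₂ - w)) - w) =
        -(ε * planeCross (z - w) (z₂ - w)) := by
      rw [show -(q + ε • (z₂ - w)) - w = -q - ε • (z₂ - w) - w by abel, map_sub,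
        map_sub (planeCross (z - w)) (-q), planeCross_eq_of_mem_segment hs, map_smul, smul_eq_mul]
      ring
    rw [hlevel, mul_neg, mul_left_comm] at hnonneg
    linarith [mul_pos hε hturn]
  · exact Or.inr (Or.inr hs)
  · have hq₂ := mem_inwardSet_add h.convex hq hs
    rw [sub_add_sub_cancel] at hq₂
    exact absurd (h.mem_interior_of_mem_inwardSet_of_mem_inwardSet p hs hq₂) hqi

theorem left_mem_inwardSet_sub : w ∈ inwardSet P (z₂ - w) := by
  have hwi := h.notMem_interior p.1.1
  refine (h.mem_or_mem_inwardSet_sub p (h.mem_of_mem_vertices p.1.1) hwi p.1.2.2.1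
    (h.ne_neg_of_isAdj p.1.symm)).resolve_right fun hback => ?_
  refine hwi (mem_interior_of_mem_inwardSet h.convex hback one_pos ?_)
  rw [one_smul, sub_sub_cancel]
  exact h.mem_of_mem_vertices p.2.1.2.1

theorem mem_inwardSet_sub_of_mem_inwardSet (hqi : q ∉ interior P) (hq : q ∈ inwardSet P (z - w)) :
    q ∈ inwardSet P (z₂ - w) := by
  refine (h.mem_or_mem_inwardSet_sub p (inwardSet_subset hq) hqi
    (fun e => h.right_notMem_inwardSet p.1 (e ▸ hq))
    (fun e => h.neg_right_notMem_inwardSet p.1 (e ▸ hq))).resolve_right fun hback => ?_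
  have hwz := neg_mem_inwardSet_neg h.neg_eq hq
  have hz₂z := neg_mem_inwardSet_neg h.neg_eq (mem_inwardSet_add h.convex hq hback)
  rw [neg_sub] at hwz
  rw [sub_add_sub_cancel, neg_sub] at hz₂z
  have hneg := h.mem_interior_of_mem_inwardSet_of_mem_inwardSet p hwz hz₂z
  exact hqi (neg_neg q ▸ neg_mem_interior_of_neg_eq h.neg_eq hneg)

theorem mem_inwardSet_sub_iff {y : ℝ × ℝ} (hy : y ∈ V) :
    y ∈ inwardSet P (z₂ - w) ↔ y = w ∨ y ∈ inwardSet P (z - w) := by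
  have hyi := h.notMem_interior hy
  constructor
  · intro hyD
    by_contra! hcon
    have hyo := ((h.eq_or_mem_openSegment_or_mem_inwardSet p hyi hyD).resolve_left
      hcon.1).resolve_right hcon.2
    refine h.notMem_segment hy p.1.1 p.1.2.1 hcon.1.symm ?_ (openSegment_subset_segment ℝ w z hyo)
    rintro rfl
    exact h.notMem_inwardSet_sub p hyD
  · rintro (rfl | hyD)
    · exact h.left_mem_inwardSet_sub p
    · exact h.mem_inwardSet_sub_of_mem_inwardSet p hyi hyD

theorem mem_inwardSet_sub_iff' {y : ℝ × ℝ} (hy : y ∈ V) :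
    y ∈ inwardSet P (z₂ - w) ↔ y = -z₂ ∨ y ∈ inwardSet P (z₂ - z) := by
  have hneg : ∀ u : ℝ × ℝ, -y ∈ inwardSet P (-u) ↔ y ∈ inwardSet P u := fun u =>
    ⟨fun hm => by simpa using neg_mem_inwardSet_neg h.neg_eq hm, neg_mem_inwardSet_neg h.neg_eq⟩
  rw [← hneg, ← hneg, neg_sub, neg_sub, ← neg_eq_iff_eq_neg]
  exact h.mem_inwardSet_sub_iff p.symm (h.neg_mem_vertices _ hy)

end IsBoundaryPath

section Parallelogram

variable (h : CentredPolygon P V) (a : IsAdj V w z)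
include h a

theorem exists_mem_openSegment_add_smul (hq : |planeCross (z - w) q| < |planeCross (z - w) w|) :
    ∃ r ∈ openSegment ℝ w (-z), ∃ t : ℝ, q = r + t • (z - w) := by
  set c := planeCross (z - w) w with hc
  have hc0 : c ≠ 0 := h.planeCross_ne_zero_of_isAdj a
  set μ := planeCross (z - w) q / c with hμ
  have hμ1 : |μ| < 1 := by
    rwa [hμ, abs_div, div_lt_one (abs_pos.2 hc0)]
  obtain ⟨hlo, hhi⟩ := abs_lt.1 hμ1
  have hμc : μ * c = planeCross (z - w) q := div_mul_cancel₀ _ hc0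
  have hz : planeCross (z - w) z = c :=
    planeCross_eq_of_mem_segment (right_mem_segment ℝ w z)
  set r := ((1 + μ) / 2) • w + ((1 - μ) / 2) • -z with hr
  have hlevel : planeCross (z - w) (q - r) = 0 := by
    rw [map_sub (planeCross (z - w)), hr, map_add, map_smul, map_smul,
      map_neg (planeCross (z - w)), hz, ← hc, ← hμc, smul_eq_mul, smul_eq_mul]
    ring
  obtain ⟨t, ht⟩ := exists_eq_smul_of_planeCross_eq_zero (sub_ne_zero.2 a.2.2.1.symm) hlevel
  exact ⟨r, ⟨(1 + μ) / 2, (1 - μ) / 2, by linarith, by linarith, by ring, rfl⟩, t,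
    by rw [← ht, add_sub_cancel]⟩

theorem openSegment_neg_subset : openSegment ℝ w (-z) ⊆ P :=
  (openSegment_subset_segment ℝ _ _).trans (h.convex.segment_subset (h.mem_of_mem_vertices a.1)
    (h.mem_of_mem_vertices (h.neg_mem_vertices _ a.2.1)))

theorem mem_interior_of_add_smul_mem {r : ℝ × ℝ} {t : ℝ} (hr : r ∈ openSegment ℝ w (-z))
    (ht : t < 0) (hq : r + t • (z - w) ∈ P)
    (hlt : |planeCross (z - w) r| < |planeCross (z - w) w|) : r ∈ interior P := by
  by_contra hri
  have hrP := h.openSegment_neg_subset a hr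
  rcases mem_inwardSet_or_mem_inwardSet_neg h.convex h.neg_eq h.zero_mem_interior
    (fun _ => exists_eq_smul_of_planeCross_eq_zero (sub_ne_zero.2 a.2.2.1.symm))
    (h.mem_of_mem_vertices a.1) hrP hri hlt with hD | hD
  · exact hri (mem_interior_of_mem_inwardSet h.convex hD (neg_pos.2 ht)
      (by rwa [neg_smul, sub_neg_eq_add]))
  · refine hri (mem_interior_of_mem_inwardSet h.convex hD one_pos ?_)
    rw [one_smul, sub_neg_eq_add]
    exact h.openSegment_neg_subset a.symm (add_sub_mem_openSegment hr)

theorem exists_vertex_mem_inwardSet (hV : 4 < V.card) :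
    ∃ y ∈ V, y ≠ w ∧ y ≠ -z ∧ y ∈ inwardSet P (z - w) := by
  obtain ⟨y, hy, hy4⟩ : ∃ y ∈ V, y ∉ ({w, z, -w, -z} : Finset (ℝ × ℝ)) :=
    Finset.exists_mem_notMem_of_card_lt_card (Finset.card_le_four.trans_lt hV)
  simp only [Finset.mem_insert, Finset.mem_singleton, not_or] at hy4
  obtain ⟨hyw, hyz, hyw', hyz'⟩ := hy4
  rw [← neg_eq_iff_eq_neg] at hyw' hyz'
  have hy' := h.neg_mem_vertices _ hy
  rcases h.mem_segment_or_mem_inwardSet a (h.mem_of_mem_vertices hy) (h.notMem_interior hy) with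
    hs | hs | hs | hs
  · exact absurd hs (h.notMem_segment hy a.1 a.2.1 (Ne.symm hyw) (Ne.symm hyz))
  · exact absurd hs (h.notMem_segment hy' a.1 a.2.1 (Ne.symm hyw') (Ne.symm hyz'))
  · exact ⟨y, hy, hyw, fun e => hyz' (neg_eq_iff_eq_neg.2 e), hs⟩
  · refine ⟨-y, hy', hyw', neg_injective.ne hyz, ?_⟩
    simpa using neg_mem_inwardSet_neg h.neg_eq hs

theorem openSegment_neg_subset_interior (hV : 4 < V.card) :
    openSegment ℝ w (-z) ⊆ interior P := by
  obtain ⟨y, hy, hyw, hyz, hD⟩ := h.exists_vertex_mem_inwardSet a hV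
  have hyP := h.mem_of_mem_vertices hy
  have hlt := h.abs_planeCross_lt_of_mem_inwardSet a hD
  have hzV := h.neg_mem_vertices _ a.2.1
  obtain ⟨r, hr, t, rfl⟩ := h.exists_mem_openSegment_add_smul a hlt
  refine openSegment_subset_interior_of_mem h.convex (h.mem_of_mem_vertices a.1)
    (h.mem_of_mem_vertices hzV) hr ?_
  rw [map_add (planeCross (z - w)), map_smul, planeCross_self, smul_zero, add_zero] at hlt
  rcases lt_trichotomy t 0 with ht | rfl | ht
  · exact h.mem_interior_of_add_smul_mem a hr ht hyP hlt
  · rw [zero_smul, add_zero] at hy hyw hyz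
    exact absurd (openSegment_subset_segment ℝ _ _ hr)
      (h.notMem_segment hy a.1 hzV (Ne.symm hyw) (Ne.symm hyz))
  · refine absurd (mem_interior_of_mem_inwardSet h.convex hD ht ?_) (h.notMem_interior hy)
    rw [add_sub_cancel_right]
    exact h.openSegment_neg_subset a hr

theorem add_sub_mem_interior (hV : 4 < V.card) (hqi : q ∉ interior P)
    (hq : q ∈ inwardSet P (z - w)) : q + (z - w) ∈ interior P := by
  obtain ⟨r, hr, t, rfl⟩ :=
    h.exists_mem_openSegment_add_smul a (h.abs_planeCross_lt_of_mem_inwardSet a hq)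
  have ht : t ≤ 0 := by
    by_contra! ht
    refine hqi (mem_interior_of_mem_inwardSet h.convex hq ht ?_)
    rw [add_sub_cancel_right]
    exact h.openSegment_neg_subset a hr
  have hopp := h.openSegment_neg_subset_interior a.symm hV (add_sub_mem_openSegment hr)
  have hfar : r + t • (z - w) + (1 - t) • (z - w) ∈ interior P := by
    convert hopp using 1
    module
  simpa using add_smul_mem_interior_of_le h.convex (inwardSet_subset hq) hfar one_pos (by linarith)

end Parallelogram

theorem exists_isCcwEdge (h : CentredPolygon P V) (hw : w ∈ V) : ∃ z, IsCcwEdge V w z := by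
  obtain ⟨z, hz, hzw, hpos⟩ := h.exists_forall_pos_mul_planeCross hw one_ne_zero
  exact ⟨z, hw, hz, hzw.symm, by simpa only [one_mul] using hpos⟩

theorem eq_or_eq_of_mem_openSegment (h : CentredPolygon P V) (a : IsAdj V w z) {y y' : ℝ × ℝ}
    (hy : y ∈ V) (hy' : y' ∈ P) (hq : q ∈ segment ℝ w z) (hq' : q ∈ openSegment ℝ y y') :
    y = w ∨ y = z := by
  by_contra! hne
  obtain ⟨-, -, -, t, ht⟩ := a
  obtain ⟨b, c, hb, hc, hbc, rfl⟩ := hq'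
  have hsplit : planeCross (z - w) (b • y + c • y') - planeCross (z - w) w =
      b * planeCross (z - w) (y - w) + c * planeCross (z - w) (y' - w) := by
    obtain rfl := eq_sub_of_add_eq hbc
    simp only [planeCross_apply, Prod.fst_sub, Prod.snd_sub, Prod.fst_add, Prod.snd_add,
      Prod.smul_fst, Prod.smul_snd, smul_eq_mul]
    ring
  rw [planeCross_eq_of_mem_segment hq, sub_self] at hsplit
  have hfst := mul_pos hb (ht y hy hne.1 hne.2)
  have hsnd := mul_nonneg hc.le (h.nonneg_of_mem ht hy')
  have := congrArg (t * ·) hsplit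
  simp only [mul_zero] at this
  linarith

theorem eq_of_mem_openSegment_of_mem_openSegment (h : CentredPolygon P V) {w' z' : ℝ × ℝ}
    (e : IsCcwEdge V w z) (e' : IsCcwEdge V w' z') (hq : q ∈ openSegment ℝ w z)
    (hq' : q ∈ openSegment ℝ w' z') : w = w' := by
  have hseg := openSegment_subset_segment ℝ w z hq
  have hz'P := h.mem_of_mem_vertices e'.2.1
  by_contra hne
  obtain rfl :=
    (h.eq_or_eq_of_mem_openSegment e.isAdj e'.1 hz'P hseg hq').resolve_left (Ne.symm hne)
  obtain rfl := (h.eq_or_eq_of_mem_openSegment e.isAdj e'.2.1 (h.mem_of_mem_vertices e'.1) hseg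
    (openSegment_symm ℝ w' z' ▸ hq')).resolve_right e'.2.2.1.symm
  obtain ⟨y, hy, hyz, hyw⟩ := h.exists_vertex_ne_ne z' w'
  have hpos := e.2.2.2 y hy hyz hyw
  have hpos' := e'.2.2.2 y hy hyw hyz
  rw [planeCross_sub_sub_swap] at hpos'
  linarith

theorem forall_mem_vertices_of_isAdj (h : CentredPolygon P V) {S : ℝ × ℝ → Prop} (hwV : w ∈ V)
    (hw : S w) (hS : ∀ a b, IsAdj V a b → S a → S b) : ∀ y ∈ V, S y := by
  classical
  intro y hy
  by_contra hyS
  obtain ⟨u, g⟩ := h.exists_exposes hy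
  obtain ⟨v, hvS, hmax⟩ := (V.filter S).exists_max_image (planeCross u)
    ⟨w, Finset.mem_filter.2 ⟨hwV, hw⟩⟩
  obtain ⟨hv, hvS⟩ := Finset.mem_filter.1 hvS
  obtain ⟨z, a, -⟩ := h.exists_isAdj_ne hv v
  obtain ⟨z₂, p⟩ := h.exists_isBoundaryPath a.symm
  -- a vertex maximising `planeCross u` among its neighbours maximises it on all of `P`
  obtain ⟨b, c, hb, hc, hbc⟩ := h.exists_nonneg_smul_add_smul p (h.mem_of_mem_vertices hy)
  have hz := hmax z (Finset.mem_filter.2 ⟨a.2.1, hS _ _ a hvS⟩)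
  have hz₂ := hmax z₂ (Finset.mem_filter.2 ⟨p.2.1.2.1, hS _ _ p.2.1 hvS⟩)
  have hlt := g.2 v hv (by rintro rfl; exact hyS hvS)
  have := congrArg (planeCross u) hbc
  simp only [map_sub, map_add, map_smul, smul_eq_mul] at this
  nlinarith [mul_nonneg hb (sub_nonneg.2 hz), mul_nonneg hc (sub_nonneg.2 hz₂)]

theorem eq_neg_or_mem_inwardSet {z₂ z₃ y : ℝ × ℝ} (h : CentredPolygon P V)
    (p : IsBoundaryPath V w z z₂) (p' : IsBoundaryPath V z z₂ z₃) (hy : y ∈ V) (hyz : y ≠ -z)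
    (hyD : y = z₃ ∨ y ∈ inwardSet P (z₂ - z₃)) : y = -w ∨ y ∈ inwardSet P (w - z) := by
  have hyz₂ : y ∈ inwardSet P (z - z₂) := ((h.mem_inwardSet_sub_iff' p'.symm hy).1
    ((h.mem_inwardSet_sub_iff p'.symm hy).2 hyD)).resolve_left hyz
  exact (h.mem_inwardSet_sub_iff' p.symm hy).1 ((h.mem_inwardSet_sub_iff p.symm hy).2 (Or.inr hyz₂))

end CentredPolygon

/-! ### Positions of a point in the translates -/

/-- The number of translates `K + x i` for which the position `v - x i` of the point `v` relative
to the translate lies in `S`. It is `0` when there are infinitely many of them. -/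
noncomputable def translateCount {ι : Type} (x : ι → ℝ × ℝ) (v : ℝ × ℝ) (S : Set (ℝ × ℝ)) : ℕ :=
  {i | v - x i ∈ S}.ncard

/-- Some translate has the point `v` at the relative position `w`. -/
def Occupied {ι : Type} (x : ι → ℝ × ℝ) (v w : ℝ × ℝ) : Prop :=
  ∃ i, v - x i = w

/-- A `k`-fold translative tiling of the plane by a polygon that is symmetric about the origin. -/
structure CentredTiling {ι : Type} (P : Set (ℝ × ℝ)) (V : Finset (ℝ × ℝ)) (x : ι → ℝ × ℝ) (k : ℕ) :
    Prop extends CentredPolygon P V where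
  tiling : IsKFoldTranslativeTiling P x k

theorem Occupied.add_sub {ι : Type} {x : ι → ℝ × ℝ} {v w : ℝ × ℝ} (ho : Occupied x v w)
    (z : ℝ × ℝ) : Occupied x (v + (z - w)) z := by
  obtain ⟨i, rfl⟩ := ho
  exact ⟨i, by abel⟩

theorem finite_setOf_sub_mem {ι : Type} {x : ι → ℝ × ℝ} (hx : ∀ R : ℝ, {i | ‖x i‖ ≤ R}.Finite)
    {S : Set (ℝ × ℝ)} (hS : Bornology.IsBounded S) (v : ℝ × ℝ) : {i | v - x i ∈ S}.Finite := by
  obtain ⟨R, hR⟩ := hS.exists_norm_le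
  refine (hx (‖v‖ + R)).subset fun i hi => ?_
  calc ‖x i‖ = ‖v - (v - x i)‖ := by rw [sub_sub_cancel]
    _ ≤ ‖v‖ + ‖v - x i‖ := norm_sub_le _ _
    _ ≤ ‖v‖ + R := by gcongr; exact hR _ hi

namespace CentredPolygon

variable {P : Set (ℝ × ℝ)} {V : Finset (ℝ × ℝ)} {u w z q : ℝ × ℝ} (h : CentredPolygon P V)
include h

theorem frontier_eq : frontier P = P \ interior P :=
  h.isCompact.isClosed.frontier_eq

theorem frontier_subset : frontier P ⊆ P :=
  h.isCompact.isClosed.frontier_subset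

theorem notMem_interior_of_mem_frontier (hq : q ∈ frontier P) : q ∉ interior P :=
  (h.frontier_eq ▸ hq).2

theorem mem_frontier (hw : w ∈ V) : w ∈ frontier P := by
  rw [h.frontier_eq]
  exact ⟨h.mem_of_mem_vertices hw, h.notMem_interior hw⟩

theorem coe_vertices_subset : (V : Set (ℝ × ℝ)) ⊆ P := fun _ => h.mem_of_mem_vertices

theorem openSegment_subset_frontier_sdiff (a : IsAdj V w z) :
    openSegment ℝ w z ⊆ frontier P \ V := by
  intro q hq
  have hseg := openSegment_subset_segment ℝ w z hq
  rw [h.frontier_eq]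
  refine ⟨⟨h.convex.segment_subset (h.mem_of_mem_vertices a.1) (h.mem_of_mem_vertices a.2.1) hseg,
    h.notMem_interior_of_mem_segment a hseg⟩, fun hqV => ?_⟩
  refine h.notMem_segment hqV a.1 a.2.1 ?_ ?_ hseg
  · rintro rfl
    exact a.2.2.1 (left_mem_openSegment_iff.1 hq)
  · rintro rfl
    exact a.2.2.1 (right_mem_openSegment_iff.1 hq)

theorem interior_union_frontier_inter_inwardSet (u : ℝ × ℝ) :
    interior P ∪ frontier P ∩ inwardSet P u = inwardSet P u := by
  refine Set.Subset.antisymm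
    (Set.union_subset interior_subset_inwardSet Set.inter_subset_right) fun q hq => ?_
  rw [h.frontier_eq]
  exact or_iff_not_imp_left.2 fun hi => ⟨⟨inwardSet_subset hq, hi⟩, hq⟩

theorem frontier_inter_inwardSet_union (u : ℝ × ℝ) (g : Exposes V u w) :
    frontier P ∩ inwardSet P u ∪ frontier P ∩ inwardSet P (-u) ∪ {w, -w} = frontier P := by
  refine Set.Subset.antisymm (Set.union_subset (Set.union_subset Set.inter_subset_left
    Set.inter_subset_left) ?_) fun q hq => ?_
  · rintro q (rfl | rfl)
    exacts [h.mem_frontier g.1, h.mem_frontier (h.neg_mem_vertices _ g.1)]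
  · by_cases hqw : q ∈ ({w, -w} : Set (ℝ × ℝ))
    · exact Or.inr hqw
    rw [Set.mem_insert_iff, Set.mem_singleton_iff, not_or] at hqw
    refine Or.inl ((h.mem_inwardSet_or_of_exposes g (h.frontier_subset hq)
      (h.notMem_interior_of_mem_frontier hq) hqw.1 hqw.2).imp ?_ ?_) <;> exact fun hD => ⟨hq, hD⟩

theorem disjoint_frontier_inter_inwardSet_neg (u : ℝ × ℝ) :
    Disjoint (frontier P ∩ inwardSet P u) (frontier P ∩ inwardSet P (-u)) :=
  Set.disjoint_left.2 fun _ hq hq' => h.notMem_interior_of_mem_frontier hq.1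
    (mem_interior_of_mem_inwardSet_neg h.convex hq.2 hq'.2)

theorem disjoint_inwardSet_pair (g : Exposes V u w) : Disjoint (inwardSet P u) {w, -w} := by
  rw [Set.disjoint_right]
  rintro q (rfl | rfl)
  exacts [h.notMem_inwardSet_of_exposes g, h.neg_notMem_inwardSet_of_exposes g]

theorem eventually_add_smul_mem_iff (g : Exposes V u w) (q : ℝ × ℝ) :
    ∀ᶠ ε in nhdsWithin (0 : ℝ) (Set.Ioi 0),
      (q + ε • u ∈ P → q ∈ inwardSet P u) ∧ (q ∈ inwardSet P u → q + ε • u ∈ interior P) := by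
  have hpos : ∀ᶠ ε in nhdsWithin (0 : ℝ) (Set.Ioi 0), 0 < ε := self_mem_nhdsWithin
  by_cases hD : q ∈ inwardSet P u
  · obtain ⟨hq, ε₀, hε₀, hi⟩ := id hD
    filter_upwards [hpos, nhdsWithin_le_nhds (Iio_mem_nhds hε₀)] with ε hε hlt
    exact ⟨fun _ => hD, fun _ => add_smul_mem_interior_of_le h.convex hq hi hε hlt.le⟩
  by_cases hq : q ∈ P
  · filter_upwards [hpos] with ε hε
    exact ⟨fun hmem => absurd hmem (h.add_smul_notMem_of_notMem_inwardSet g hD hε hq),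
      fun hD' => absurd hD' hD⟩
  · have hcont : ContinuousAt (fun ε : ℝ => q + ε • u) 0 := by fun_prop
    have hout : ∀ᶠ ε in nhds (0 : ℝ), q + ε • u ∈ Pᶜ :=
      hcont.eventually_mem (h.isCompact.isClosed.isOpen_compl.mem_nhds (by simpa using hq))
    filter_upwards [nhdsWithin_le_nhds hout] with ε hε
    exact ⟨fun hmem => absurd hmem hε, fun hD' => absurd hD' hD⟩

end CentredPolygon

namespace CentredTiling

variable {ι : Type} {P S T : Set (ℝ × ℝ)} {V : Finset (ℝ × ℝ)} {x : ι → ℝ × ℝ} {k : ℕ}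
  {u v w z : ℝ × ℝ} (h : CentredTiling P V x k)
include h

theorem finite_of_subset (hS : S ⊆ P) (v : ℝ × ℝ) : {i | v - x i ∈ S}.Finite :=
  finite_setOf_sub_mem h.tiling.1 (h.isCompact.isBounded.subset hS) v

theorem translateCount_mono (hST : S ⊆ T) (hT : T ⊆ P) (v : ℝ × ℝ) :
    translateCount x v S ≤ translateCount x v T :=
  Set.ncard_le_ncard (fun _ hi => hST hi) (h.finite_of_subset hT v)

theorem translateCount_union (hS : S ⊆ P) (hT : T ⊆ P) (hST : Disjoint S T) (v : ℝ × ℝ) :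
    translateCount x v (S ∪ T) = translateCount x v S + translateCount x v T :=
  Set.ncard_union_eq (hST.preimage fun i => v - x i) (h.finite_of_subset hS v)
    (h.finite_of_subset hT v)

theorem exists_forall_add_smul_mem_iff (g : Exposes V u w) (v : ℝ × ℝ) :
    ∃ ε : ℝ, ∀ i, (v - x i + ε • u ∈ P → v - x i ∈ inwardSet P u) ∧
      (v - x i ∈ inwardSet P u → v - x i + ε • u ∈ interior P) := by
  have hfin : {i | v - x i ∈ P + Metric.closedBall 0 ‖u‖}.Finite :=
    finite_setOf_sub_mem h.tiling.1 (h.isCompact.isBounded.add Metric.isBounded_closedBall) v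
  have hev := (Filter.eventually_all_finite hfin).2 fun i _ =>
    h.eventually_add_smul_mem_iff g (v - x i)
  have hunit : ∀ᶠ ε in nhdsWithin (0 : ℝ) (Set.Ioi 0), ε ∈ Set.Ioo (0 : ℝ) 1 :=
    Ioo_mem_nhdsGT one_pos
  obtain ⟨ε, hε, hε0, hε1⟩ := (hev.and hunit).exists
  refine ⟨ε, fun i => ⟨fun hi => (hε i ?_).1 hi, fun hi => (hε i ?_).2 hi⟩⟩
  · refine Set.mem_add.2 ⟨_, hi, -(ε • u), ?_, add_neg_cancel_right _ _⟩
    rw [mem_closedBall_zero_iff, norm_neg, norm_smul, Real.norm_of_nonneg hε0.le]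
    exact mul_le_of_le_one_left (norm_nonneg u) hε1.le
  · exact Set.mem_add.2 ⟨_, inwardSet_subset hi, 0, by simp, add_zero _⟩

/- A slight shift of `v` in the direction `u` moves it off all boundaries, and the tiling covers
the shifted point exactly `k` times. -/
theorem translateCount_inwardSet (g : Exposes V u w) (v : ℝ × ℝ) :
    translateCount x v (inwardSet P u) = k := by
  obtain ⟨ε, hε⟩ := h.exists_forall_add_smul_mem_iff g v
  have hfin := h.finite_of_subset (S := inwardSet P u) inwardSet_subset v
  have hshift : ∀ i, v + ε • u - x i = v - x i + ε • u := fun i => add_sub_right_comm _ _ _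
  apply le_antisymm
  · rw [translateCount, Set.ncard_eq_toFinset_card _ hfin]
    refine h.tiling.2.2 (v + ε • u) _ fun i hi => ?_
    rw [hshift]
    exact (hε i).2 (hfin.mem_toFinset.1 hi)
  · obtain ⟨s, hs, hmem⟩ := h.tiling.2.1 (v + ε • u)
    rw [← Set.ncard_coe_finset s] at hs
    refine hs.trans (Set.ncard_le_ncard (fun i hi => (hε i).1 ?_) hfin)
    rw [← hshift]
    exact hmem i hi

theorem translateCount_interior_add_inwardSet (g : Exposes V u w) (v : ℝ × ℝ) :
    translateCount x v (interior P) + translateCount x v (frontier P ∩ inwardSet P u) = k := by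
  have hd : Disjoint (interior P) (frontier P ∩ inwardSet P u) := Set.disjoint_right.2
    fun _ hq => h.notMem_interior_of_mem_frontier hq.1
  rw [← h.translateCount_union interior_subset (Set.inter_subset_left.trans h.frontier_subset) hd,
    h.interior_union_frontier_inter_inwardSet, h.translateCount_inwardSet g]

theorem two_mul_translateCount_interior_add_frontier (hw : w ∈ V) (v : ℝ × ℝ) :
    2 * translateCount x v (interior P) + translateCount x v (frontier P) =
      2 * k + translateCount x v {w, -w} := by
  obtain ⟨u, g⟩ := h.exists_exposes hw
  have hfr : ∀ u, frontier P ∩ inwardSet P u ⊆ P := fun u =>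
    Set.inter_subset_left.trans h.frontier_subset
  have hpair : ({w, -w} : Set (ℝ × ℝ)) ⊆ P := Set.pair_subset (h.mem_of_mem_vertices hw)
    (h.mem_of_mem_vertices (h.neg_mem_vertices w hw))
  have hd := h.disjoint_inwardSet_pair g
  have hd' := h.disjoint_inwardSet_pair (h.exposes_neg g)
  rw [neg_neg, Set.pair_comm] at hd'
  have hsum := h.translateCount_union (Set.union_subset (hfr u) (hfr (-u))) hpair
    ((hd.mono_left Set.inter_subset_right).sup_left (hd'.mono_left Set.inter_subset_right)) v
  rw [h.frontier_inter_inwardSet_union u g, h.translateCount_union (hfr u) (hfr (-u))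
    (h.disjoint_frontier_inter_inwardSet_neg u)] at hsum
  have hu := h.translateCount_interior_add_inwardSet g v
  have hu' := h.translateCount_interior_add_inwardSet (h.exposes_neg g) v
  omega

theorem translateCount_pair (hw : w ∈ V) (v : ℝ × ℝ) :
    translateCount x v {w, -w} = translateCount x v {w} + translateCount x v {-w} := by
  have hnw := h.neg_mem_vertices w hw
  rw [Set.insert_eq, h.translateCount_union (Set.singleton_subset_iff.2 (h.mem_of_mem_vertices hw))
    (Set.singleton_subset_iff.2 (h.mem_of_mem_vertices hnw))]
  exact Set.disjoint_singleton.2 (h.neg_ne_self hw).symm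

theorem translateCount_vertices (v : ℝ × ℝ) :
    translateCount x v V = ∑ w ∈ V, translateCount x v {w} := by
  classical
  have hfin := h.finite_of_subset h.coe_vertices_subset v
  rw [translateCount, Set.ncard_eq_toFinset_card _ hfin,
    Finset.card_eq_sum_card_fiberwise (f := fun i => v - x i) (t := V)
      fun i hi => hfin.mem_toFinset.1 hi]
  refine Finset.sum_congr rfl fun w hw => ?_
  rw [translateCount, ← Set.ncard_coe_finset]
  congr 1
  ext i
  simp only [Finset.coe_filter, Set.Finite.mem_toFinset, Set.mem_ofPred_eq, Set.mem_singleton_iff]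
  exact ⟨And.right, fun hi => ⟨by rwa [hi], hi⟩⟩

theorem two_mul_translateCount_vertices {s : ℕ} (hs : ∀ w ∈ V, translateCount x v {w, -w} = s) :
    2 * translateCount x v V = V.card * s := by
  have hneg : ∑ w ∈ V, translateCount x v {-w} = ∑ w ∈ V, translateCount x v {w} :=
    Finset.sum_equiv (Equiv.neg _) (fun w => ⟨h.neg_mem_vertices w, fun hw => by
      simpa using h.neg_mem_vertices _ hw⟩) fun _ _ => rfl
  calc 2 * translateCount x v V
      = ∑ w ∈ V, (translateCount x v {w} + translateCount x v {-w}) := by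
        rw [Finset.sum_add_distrib, hneg, h.translateCount_vertices, two_mul]
    _ = V.card * s := by
        rw [← smul_eq_mul, ← Finset.sum_const]
        exact Finset.sum_congr rfl fun w hw => by rw [← h.translateCount_pair hw, hs w hw]

theorem translateCount_vertices_add_sdiff (v : ℝ × ℝ) :
    translateCount x v V + translateCount x v (frontier P \ V) =
      translateCount x v (frontier P) := by
  rw [← h.translateCount_union h.coe_vertices_subset (Set.sdiff_subset.trans h.frontier_subset)
    Set.disjoint_sdiff_right, Set.union_sdiff_cancel fun _ => h.mem_frontier]

theorem translateCount_singleton_pos_iff (hw : w ∈ V) :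
    0 < translateCount x v {w} ↔ Occupied x v w :=
  Set.ncard_pos (h.finite_of_subset (Set.singleton_subset_iff.2 (h.mem_of_mem_vertices hw)) v)

/-! ### Tilings by polygons with at least `2 * k + 3` vertices -/

section ManyVertices

variable (hV : 2 * k + 3 ≤ V.card) (hw : w ∈ V) (hocc : Occupied x v w)
include hV hw hocc

/- All counts `translateCount x v {y, -y}` agree; if the common value `s` were at least `2`, the
vertex positions alone would exceed the `2 * k + s` available boundary positions. -/
theorem translateCount_pair_eq_one {y : ℝ × ℝ} (hy : y ∈ V) : translateCount x v {y, -y} = 1 := by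
  have hw' := h.two_mul_translateCount_interior_add_frontier hw v
  have hconst : ∀ y ∈ V, translateCount x v {y, -y} = translateCount x v {w, -w} := fun y hy => by
    have := h.two_mul_translateCount_interior_add_frontier hy v
    omega
  have hpos := (h.translateCount_singleton_pos_iff hw).2 hocc
  rw [hconst y hy]
  have hsum := h.two_mul_translateCount_vertices hconst
  have hle := h.translateCount_mono (fun _ => h.mem_frontier) h.frontier_subset v
  have hpair := h.translateCount_pair hw v
  by_contra hne
  nlinarith [Nat.mul_le_mul_right (translateCount x v {w, -w}) hV,
    show 2 ≤ translateCount x v {w, -w} by omega]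

theorem translateCount_add_translateCount_neg {y : ℝ × ℝ} (hy : y ∈ V) :
    translateCount x v {y} + translateCount x v {-y} = 1 := by
  rw [← h.translateCount_pair hy, h.translateCount_pair_eq_one hV hw hocc hy]

theorem occupied_neg_iff {y : ℝ × ℝ} (hy : y ∈ V) : Occupied x v (-y) ↔ ¬ Occupied x v y := by
  have := h.translateCount_add_translateCount_neg hV hw hocc hy
  rw [← h.translateCount_singleton_pos_iff hy,
    ← h.translateCount_singleton_pos_iff (h.neg_mem_vertices y hy)]
  omega

theorem eq_of_sub_eq_sub {i j : ι} (hi : v - x i ∈ V) (hij : v - x i = v - x j) : i = j := by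
  have := h.translateCount_add_translateCount_neg hV hw hocc hi
  have hfin := h.finite_of_subset (Set.singleton_subset_iff.2 (h.mem_of_mem_vertices hi)) v
  exact (Set.ncard_le_one hfin).1 (by unfold translateCount at this; omega) i rfl j hij.symm

theorem two_mul_translateCount_vertices_eq_card : 2 * translateCount x v V = V.card := by
  rw [h.two_mul_translateCount_vertices fun y hy => h.translateCount_pair_eq_one hV hw hocc hy,
    mul_one]

theorem two_mul_translateCount_interior_add_frontier_eq :
    2 * translateCount x v (interior P) + translateCount x v (frontier P) = 2 * k + 1 := by
  rw [h.two_mul_translateCount_interior_add_frontier hw,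
    h.translateCount_pair_eq_one hV hw hocc hw]

/- Otherwise every vertex position is matched with a position in the relative interior of the edge
that starts there, and the frontier has too few positions for that. -/
theorem exists_isCcwEdge_forall_notMem_openSegment :
    ∃ y z, IsCcwEdge V y z ∧ Occupied x v y ∧ ∀ j, v - x j ∉ openSegment ℝ y z := by
  by_contra! hne
  have hmatch : ∀ i, v - x i ∈ V →
      ∃ z j, IsCcwEdge V (v - x i) z ∧ v - x j ∈ openSegment ℝ (v - x i) z := fun i hi => by
    obtain ⟨z, e⟩ := h.exists_isCcwEdge hi
    obtain ⟨j, hj⟩ := hne _ z e ⟨i, rfl⟩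
    exact ⟨z, j, e, hj⟩
  choose! end' match' hedge hmem using hmatch
  have hle : translateCount x v V ≤ translateCount x v (frontier P \ V) :=
    Set.ncard_le_ncard_of_injOn match'
      (fun i hi => h.openSegment_subset_frontier_sdiff (hedge i hi).isAdj (hmem i hi))
      (fun i hi j hj hij => h.eq_of_sub_eq_sub hV hw hocc hi
        (h.eq_of_mem_openSegment_of_mem_openSegment (hedge i hi) (hedge j hj) (hmem i hi)
          (hij ▸ hmem j hj)))
      (h.finite_of_subset (Set.sdiff_subset.trans h.frontier_subset) v)
  have hadd := h.translateCount_vertices_add_sdiff v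
  have hcard := h.two_mul_translateCount_vertices_eq_card hV hw hocc
  have hfr := h.two_mul_translateCount_interior_add_frontier_eq hV hw hocc
  omega

theorem two_mul_translateCount_interior_lt : 2 * translateCount x v (interior P) < k := by
  have hcard := h.two_mul_translateCount_vertices_eq_card hV hw hocc
  have hfr := h.two_mul_translateCount_interior_add_frontier_eq hV hw hocc
  have hadd := h.translateCount_vertices_add_sdiff v
  omega

/- Moving along an edge whose relative interior contains no position turns all boundary positions
counted here, except the start of the edge, into interior ones. -/
theorem exists_translateCount_inter_inwardSet_le :
    ∃ y z u y', IsAdj V y z ∧ Occupied x v y ∧ Exposes V u y' ∧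
      translateCount x v (frontier P ∩ inwardSet P u) ≤
        1 + translateCount x (v + (z - y)) (interior P) := by
  obtain ⟨y, z, e, hy, hfree⟩ := h.exists_isCcwEdge_forall_notMem_openSegment hV hw hocc
  obtain ⟨z₂, p⟩ := h.exists_isBoundaryPath e.isAdj
  obtain ⟨y', -, g⟩ := h.exists_exposes_sub p
  have hint := h.two_mul_translateCount_interior_lt hV hw hocc
  refine ⟨y, z, z₂ - y, y', e.isAdj, hy, g, ?_⟩
  have hsub : {i | v - x i ∈ frontier P ∩ inwardSet P (z₂ - y)} ⊆
      {i | v - x i ∈ ({y} : Set (ℝ × ℝ))} ∪ {i | v + (z - y) - x i ∈ interior P} := by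
    rintro i ⟨hfr, hD⟩
    have hi := h.notMem_interior_of_mem_frontier hfr
    rcases h.eq_or_mem_openSegment_or_mem_inwardSet p hi hD with heq | hseg | hD'
    · exact Or.inl heq
    · exact absurd hseg (hfree i)
    · have := h.add_sub_mem_interior e.isAdj (by omega) hi hD'
      exact Or.inr (by rwa [Set.mem_ofPred_eq, add_sub_right_comm])
  have hsingle := h.translateCount_add_translateCount_neg hV hw hocc e.1
  calc translateCount x v (frontier P ∩ inwardSet P (z₂ - y))
      ≤ translateCount x v {y} + translateCount x (v + (z - y)) (interior P) :=
        (Set.ncard_le_ncard hsub ((h.finite_of_subset (Set.singleton_subset_iff.2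
          (h.mem_of_mem_vertices e.1)) v).union (h.finite_of_subset interior_subset _))).trans
          (Set.ncard_union_le _ _)
    _ ≤ 1 + translateCount x (v + (z - y)) (interior P) := by omega

theorem two_mul_translateCount_interior_add_one :
    2 * translateCount x v (interior P) + 1 = k := by
  obtain ⟨y, z, u, y', a, hy, g, hle⟩ :=
    h.exists_translateCount_inter_inwardSet_le hV hw hocc
  have hint := h.two_mul_translateCount_interior_lt hV hw hocc
  have hint' := h.two_mul_translateCount_interior_lt hV a.2.1 (hy.add_sub z)
  have hk := h.translateCount_interior_add_inwardSet g v
  omega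

theorem card_eq : V.card = 2 * k + 4 := by
  have hint := h.two_mul_translateCount_interior_add_one hV hw hocc
  have hcard := h.two_mul_translateCount_vertices_eq_card hV hw hocc
  have hfr := h.two_mul_translateCount_interior_add_frontier_eq hV hw hocc
  have hadd := h.translateCount_vertices_add_sdiff v
  omega

theorem sub_mem_vertices_of_sub_mem_frontier {i : ι} (hi : v - x i ∈ frontier P) :
    v - x i ∈ V := by
  have hint := h.two_mul_translateCount_interior_add_one hV hw hocc
  have hcard := h.two_mul_translateCount_vertices_eq_card hV hw hocc
  have hfr := h.two_mul_translateCount_interior_add_frontier_eq hV hw hocc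
  have hadd := h.translateCount_vertices_add_sdiff v
  by_contra hiV
  have hpos : 0 < translateCount x v (frontier P \ V) :=
    (Set.ncard_pos (h.finite_of_subset (Set.sdiff_subset.trans h.frontier_subset) v)).2
      ⟨i, hi, hiV⟩
  omega

theorem translateCount_singleton_add_inter_inwardSet {y z : ℝ × ℝ} (a : IsAdj V y z) :
    translateCount x v {y} + translateCount x v (V ∩ inwardSet P (z - y)) =
      translateCount x v (interior P) + 1 := by
  obtain ⟨z₂, p⟩ := h.exists_isBoundaryPath a
  obtain ⟨y', -, g⟩ := h.exists_exposes_sub p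
  have hd : Disjoint {y} ((V : Set (ℝ × ℝ)) ∩ inwardSet P (z - y)) :=
    Set.disjoint_singleton_left.2 fun hy =>
      h.notMem_inwardSet_of_abs_planeCross_eq a rfl hy.2
  have heq : {i | v - x i ∈ frontier P ∩ inwardSet P (z₂ - y)} =
      {i | v - x i ∈ {y} ∪ (V : Set (ℝ × ℝ)) ∩ inwardSet P (z - y)} := by
    ext i
    constructor
    · rintro ⟨hfr, hD⟩
      have hi := h.sub_mem_vertices_of_sub_mem_frontier hV hw hocc hfr
      exact ((h.mem_inwardSet_sub_iff p hi).1 hD).imp_right fun hD' => ⟨hi, hD'⟩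
    · rintro (hy | ⟨hi, hD⟩)
      · have hi : v - x i ∈ V := by rw [hy]; exact a.1
        exact ⟨h.mem_frontier hi, (h.mem_inwardSet_sub_iff p hi).2 (Or.inl hy)⟩
      · exact ⟨h.mem_frontier hi, (h.mem_inwardSet_sub_iff p hi).2 (Or.inr hD)⟩
  have hint := h.two_mul_translateCount_interior_add_one hV hw hocc
  have hk := h.translateCount_interior_add_inwardSet g v
  rw [translateCount, translateCount, heq] at hk
  rw [← h.translateCount_union (Set.singleton_subset_iff.2 (h.mem_of_mem_vertices a.1))
    (Set.inter_subset_right.trans inwardSet_subset) hd]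
  unfold translateCount at hint ⊢
  omega

theorem occupied_iff_of_isAdj {y z : ℝ × ℝ} (a : IsAdj V y z) :
    Occupied x v y ↔ ¬ Occupied x v z := by
  have hcount := h.translateCount_singleton_add_inter_inwardSet hV hw hocc a
  have hcount' := h.translateCount_singleton_add_inter_inwardSet hV hw hocc (h.isAdj_neg a).symm
  rw [neg_sub_neg] at hcount'
  rw [← h.occupied_neg_iff hV hw hocc a.2.1, ← h.translateCount_singleton_pos_iff a.1,
    ← h.translateCount_singleton_pos_iff (h.neg_mem_vertices z a.2.1)]
  omega

theorem setOf_sub_mem_vertices_inter_inwardSet_eq (a : IsAdj V w z) :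
    {i | v - x i ∈ (V : Set (ℝ × ℝ)) ∩ inwardSet P (z - w)} =
      {i | v + (z - w) - x i ∈ interior P} := by
  have hcard := h.card_eq hV hw hocc
  have hint := h.two_mul_translateCount_interior_add_one hV hw hocc
  have hint' := h.two_mul_translateCount_interior_add_one hV a.2.1 (hocc.add_sub z)
  have hw1 := h.translateCount_add_translateCount_neg hV hw hocc hw
  have hpos := (h.translateCount_singleton_pos_iff hw).2 hocc
  have hcount := h.translateCount_singleton_add_inter_inwardSet hV hw hocc a
  refine Set.eq_of_subset_of_ncard_le ?_ ?_ (h.finite_of_subset interior_subset _)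
  · rintro i ⟨hi, hD⟩
    have := h.add_sub_mem_interior a (by omega) (h.notMem_interior hi) hD
    rwa [Set.mem_ofPred_eq, add_sub_right_comm]
  · change translateCount x (v + (z - w)) (interior P) ≤
      translateCount x v ((V : Set (ℝ × ℝ)) ∩ inwardSet P (z - w))
    omega

theorem occupied_of_isBoundaryPath {z₂ : ℝ × ℝ} (p : IsBoundaryPath V w z z₂) :
    Occupied x v z₂ :=
  not_not.1 fun hn => (h.occupied_iff_of_isAdj hV hw hocc p.1).1 hocc
    ((h.occupied_iff_of_isAdj hV hw hocc p.2.1).2 hn)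

end ManyVertices

section BoundaryPath

variable (hV : 2 * k + 3 ≤ V.card) {y z₂ z₃ : ℝ × ℝ} (p : IsBoundaryPath V w z z₂)
  (p' : IsBoundaryPath V z z₂ z₃) (hocc : Occupied x v w)
include hV p p' hocc

theorem occupied_add_sub_iff (hy : y ∈ V) :
    Occupied x (v + (z - w)) y ↔ Occupied x (v + (z₃ - z₂)) y := by
  have hz := hocc.add_sub z
  have hz₃ := (h.occupied_of_isBoundaryPath hV p.1.1 hocc p).add_sub z₃
  refine h.forall_mem_vertices_of_isAdj
    (S := fun y => Occupied x (v + (z - w)) y ↔ Occupied x (v + (z₃ - z₂)) y) p'.2.1.2.1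
    (iff_of_true (h.occupied_of_isBoundaryPath hV p'.1.1 hz p') hz₃) (fun a b e he => ?_) y hy
  rwa [h.occupied_iff_of_isAdj hV p'.1.1 hz e, h.occupied_iff_of_isAdj hV p'.2.1.2.1 hz₃ e,
    not_iff_not] at he

/- The translates occupying the two sets of vertices are in both cases those that contain `v` in
their interior. -/
theorem sub_mem_inwardSet_iff (i : ι) :
    v + (z - w) - x i ∈ (V : Set (ℝ × ℝ)) ∩ inwardSet P (w - z) ↔
      v + (z₃ - z₂) - x i ∈ (V : Set (ℝ × ℝ)) ∩ inwardSet P (z₂ - z₃) := by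
  have heq := h.setOf_sub_mem_vertices_inter_inwardSet_eq hV p.1.2.1 (hocc.add_sub z) p.1.symm
  have heq' := h.setOf_sub_mem_vertices_inter_inwardSet_eq hV p'.2.1.2.1
    ((h.occupied_of_isBoundaryPath hV p.1.1 hocc p).add_sub z₃) p'.2.1.symm
  rw [show v + (z - w) + (w - z) = v by abel] at heq
  rw [show v + (z₃ - z₂) + (z₂ - z₃) = v by abel] at heq'
  exact Set.ext_iff.1 (heq.trans heq'.symm) i

theorem eq_neg_or_mem_inwardSet_of_occupied (hy : y ∈ V) (hyo : Occupied x (v + (z - w)) y)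
    (hyD : y = z₃ ∨ y ∈ inwardSet P (z₂ - z₃)) : y = -w ∨ y ∈ inwardSet P (w - z) := by
  refine h.eq_neg_or_mem_inwardSet p p' hy ?_ hyD
  rintro rfl
  exact (h.occupied_neg_iff hV p.1.2.1 (hocc.add_sub z) p.1.2.1).1 hyo (hocc.add_sub z)

theorem sub_ne_sub : z₃ - z₂ ≠ z - w := by
  intro hd
  have hz₃ := (h.occupied_of_isBoundaryPath hV p.1.1 hocc p).add_sub z₃
  rcases h.eq_neg_or_mem_inwardSet_of_occupied hV p p' hocc p'.2.1.2.1 (hd ▸ hz₃) (Or.inl rfl)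
    with rfl | hD
  · refine h.ne_neg_of_isAdj p'.1 ?_
    rw [← sub_sub_cancel (-w) z₂, hd]
    abel
  · obtain ⟨i, hi⟩ := hz₃
    have hi' := (h.sub_mem_inwardSet_iff hV p p' hocc i).1 (by
      rw [← hd, hi]
      exact ⟨p'.2.1.2.1, hD⟩)
    rw [hi] at hi'
    exact h.notMem_inwardSet_of_abs_planeCross_eq p'.2.1.symm rfl hi'.2

/- Iterating the translation that compares the two edges must leave the finite set of these
positions, which is only possible at `-w`. -/
theorem exists_neg_eq_add_nsmul (hy : y ∈ V) (hyo : Occupied x (v + (z - w)) y)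
    (hyD : y ∈ inwardSet P (w - z)) : ∃ n : ℕ, -w = y + n • ((z₃ - z₂) - (z - w)) := by
  refine exists_eq_add_nsmul_of_finite
    (Y := {y | y ∈ V ∧ Occupied x (v + (z - w)) y ∧ y ∈ inwardSet P (w - z)})
    (V.finite_toSet.subset fun _ hy => hy.1) (sub_ne_zero.2 (h.sub_ne_sub hV p p' hocc)) ?_
    ⟨hy, hyo, hyD⟩
  rintro _ ⟨hy, ⟨i, rfl⟩, hyD⟩
  have hi := (h.sub_mem_inwardSet_iff hV p p' hocc i).1 ⟨hy, hyD⟩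
  rw [show v + (z - w) - x i + ((z₃ - z₂) - (z - w)) = v + (z₃ - z₂) - x i by abel]
  have hio := (h.occupied_add_sub_iff hV p p' hocc hi.1).2 ⟨i, rfl⟩
  exact (h.eq_neg_or_mem_inwardSet_of_occupied hV p p' hocc hi.1 hio (Or.inr hi.2)).imp_right
    fun hD => ⟨hi.1, hio, hD⟩

theorem not_twelve_le_card : ¬ 12 ≤ V.card := by
  intro h12
  have hz := hocc.add_sub z
  have hcard := h.card_eq hV p.1.1 hocc
  have hint := h.two_mul_translateCount_interior_add_one hV p.1.1 hocc
  have heq := h.setOf_sub_mem_vertices_inter_inwardSet_eq hV p.1.2.1 hz p.1.symm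
  rw [show v + (z - w) + (w - z) = v by abel] at heq
  have htwo : 1 < {i | v - x i ∈ interior P}.ncard := by
    unfold translateCount at hint
    omega
  obtain ⟨i, hi, j, hj, hij⟩ :=
    (Set.one_lt_ncard (h.finite_of_subset interior_subset v)).1 htwo
  rw [← heq] at hi hj
  obtain ⟨m, hm⟩ := h.exists_neg_eq_add_nsmul hV p p' hocc hi.1 ⟨i, rfl⟩ hi.2
  obtain ⟨n, hn⟩ := h.exists_neg_eq_add_nsmul hV p p' hocc hj.1 ⟨j, rfl⟩ hj.2
  have hw := h.neg_right_notMem_inwardSet p.1.symm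
  refine h.not_collinear hi.1 hj.1 (h.neg_mem_vertices w p.1.1)
    (fun e => hij (h.eq_of_sub_eq_sub hV p.1.2.1 hz hi.1 e))
    (fun e => hw (e ▸ hj.2)) (fun e => hw (e ▸ hi.2)) ?_
  refine (collinear_iff_of_mem (p₀ := -w) (by simp)).2 ⟨(z₃ - z₂) - (z - w), ?_⟩
  rintro y (rfl | rfl | rfl)
  · exact ⟨-m, by rw [hm, vadd_eq_add]; module⟩
  · exact ⟨-n, by rw [hn, vadd_eq_add]; module⟩
  · exact ⟨0, by simp⟩

end BoundaryPath

theorem card_le (hk : 0 < k) (h12 : 12 ≤ V.card) : V.card ≤ 2 * k + 2 := by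
  by_contra! hlt
  obtain ⟨w, hw⟩ : V.Nonempty := Finset.card_pos.1 (by omega)
  obtain ⟨z, e⟩ := h.exists_isCcwEdge hw
  obtain ⟨z₂, p⟩ := h.exists_isBoundaryPath e.isAdj
  obtain ⟨z₃, p'⟩ := h.exists_isBoundaryPath p.2.1
  obtain ⟨s, hs, -⟩ := h.tiling.2.1 0
  obtain ⟨i, -⟩ := Finset.card_pos.1 (hk.trans_le hs)
  exact h.not_twelve_le_card hlt p p' ⟨i, add_sub_cancel_left (x i) w⟩ h12

end CentredTiling

/-! ### Reduction to polygons centred at the origin -/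

theorem IsConvexPolygon.mem_iff_mem_extremePoints {P : Set (ℝ × ℝ)} {V : Finset (ℝ × ℝ)}
    (hP : IsConvexPolygon P V) {v : ℝ × ℝ} : v ∈ V ↔ v ∈ Set.extremePoints ℝ P :=
  ⟨hP.2.1 v, fun hv => extremePoints_convexHull_subset (hP.1 ▸ hv)⟩

theorem IsConvexPolygon.vadd {P : Set (ℝ × ℝ)} {V : Finset (ℝ × ℝ)} (hP : IsConvexPolygon P V)
    (a : ℝ × ℝ) : IsConvexPolygon (a +ᵥ P) (a +ᵥ V) := by
  refine ⟨?_, fun v hv => ?_, ?_⟩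
  · rw [Finset.coe_vadd_finset, convexHull_vadd, ← hP.1]
  · obtain ⟨v, hvV, rfl⟩ := Finset.mem_vadd_finset.1 hv
    rw [extremePoints_vadd]
    exact Set.vadd_mem_vadd_set (hP.2.1 v hvV)
  · rw [interior_vadd]
    exact hP.2.2.vadd_set

theorem IsConvexPolygon.centredPolygon {P : Set (ℝ × ℝ)} {V : Finset (ℝ × ℝ)}
    (hP : IsConvexPolygon P V) (hneg : -P = P) : CentredPolygon P V := by
  have hconv : Convex ℝ P := hP.1 ▸ convex_convexHull ℝ _
  refine ⟨hP.1, fun v hv hmem => ?_, fun v hv => ?_, ?_⟩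
  · exact (hconv.mem_extremePoints_iff_mem_sdiff_convexHull_sdiff.1 (hP.2.1 v hv)).2
      (convexHull_mono (Set.sdiff_subset_sdiff_left (hP.1 ▸ subset_convexHull ℝ _)) hmem)
  · have himage : (-·) '' Set.extremePoints ℝ P = Set.extremePoints ℝ ((-·) '' P) :=
      image_extremePoints (LinearEquiv.neg ℝ) P
    rw [Set.image_neg_eq_neg, Set.image_neg_eq_neg, hneg] at himage
    rw [hP.mem_iff_mem_extremePoints, ← Set.mem_neg, himage]
    exact hP.2.1 v hv
  · obtain ⟨q, hq⟩ := hP.2.2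
    have hcombo := hconv.combo_interior_self_mem_interior hq
      (y := -q) (by rw [← Set.mem_neg, hneg]; exact interior_subset hq)
      one_half_pos one_half_pos.le (add_halves 1)
    rwa [smul_neg, add_neg_cancel] at hcombo

theorem IsKFoldTranslativeTiling.vadd {ι : Type} {K : Set (ℝ × ℝ)} {x : ι → ℝ × ℝ} {k : ℕ}
    (ht : IsKFoldTranslativeTiling K x k) (a : ℝ × ℝ) :
    IsKFoldTranslativeTiling (a +ᵥ K) (fun i => x i - a) k := by
  have hmem : ∀ (S : Set (ℝ × ℝ)) p i, p - (x i - a) ∈ a +ᵥ S ↔ p - x i ∈ S := fun S p i => by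
    rw [Set.mem_vadd_set_iff_neg_vadd_mem, vadd_eq_add, show -a + (p - (x i - a)) = p - x i by abel]
  refine ⟨fun R => (ht.1 (R + ‖a‖)).subset fun i hi => ?_, fun p => ?_, fun p s hs => ?_⟩
  · calc ‖x i‖ = ‖x i - a + a‖ := by rw [sub_add_cancel]
      _ ≤ ‖x i - a‖ + ‖a‖ := norm_add_le _ _
      _ ≤ R + ‖a‖ := by gcongr; exact hi
  · simpa only [hmem] using ht.2.1 p
  · simp only [interior_vadd, hmem] at hs
    exact ht.2.2 p s hs

theorem tau_tetradecagon_ge_general (P : Set (ℝ × ℝ)) (V : Finset (ℝ × ℝ))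
    (hP : IsConvexPolygon P V) (hV : 12 ≤ V.card) (hsym : IsCentrallySymmetric P)
    (k : ℕ) (hk : 0 < k) (ι : Type) (x : ι → ℝ × ℝ)
    (htile : IsKFoldTranslativeTiling P x k) :
    V.card ≤ 2 * k + 2 := by
  obtain ⟨c, hc⟩ := hsym
  have h : CentredTiling (-c +ᵥ P) (-c +ᵥ V) (fun i => x i - -c) k :=
    ⟨(hP.vadd (-c)).centredPolygon (neg_vadd_eq_of_forall_two_nsmul_sub_mem hc), htile.vadd (-c)⟩
  simpa only [Finset.card_vadd_finset] using h.card_le hk (by rwa [Finset.card_vadd_finset])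

/-- If a centrally symmetric convex tetradecagon (a convex polygon with exactly 14 vertices,
symmetric about a point) admits a `k`-fold translative tiling of the plane, then
`k ≥ 6`; that is, `τ(P) ≥ 6`. -/
theorem tau_tetradecagon_ge (P : Set (ℝ × ℝ)) (V : Finset (ℝ × ℝ))
    (hP : IsConvexPolygon P V) (hV : V.card = 14) (hsym : IsCentrallySymmetric P)
    (k : ℕ) (hk : 0 < k) (ι : Type) (x : ι → ℝ × ℝ)
    (htile : IsKFoldTranslativeTiling P x k) :
    6 ≤ k := by
  have := tau_tetradecagon_ge_general P V hP (by omega) hsym k hk ι x htile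
  omega
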